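/- Each S_{2i,j} (1 ≤ i ≤ n²/2, j ∈ {0,1}) is a simple left u-module of k-dimension n²−2i+1 (in particular of odd dimension), and every simple left u-module is isomorphic to some S_{2i,j}; in particular u has exactly n² isomorphism classes of simple modules, and every simple u-module has odd dimension. -/

import Mathlib

noncomputable section

open scoped TensorProduct

namespace QFL

/-- The defining relations of the quasi-Frobenius-Lusztig kernel `ũ_q(sl₂)`,
on the free algebra on four generators `K = ι 0`, `K̂ = ι 1`, `E = ι 2`, `F = ι 3`. -/
inductive Rel (k : Type) [Field k] (n : ℕ) (q : k) :
    FreeAlgebra k (Fin 4) → FreeAlgebra k (Fin 4) → Prop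
  | Kord : Rel k n q (FreeAlgebra.ι k (0 : Fin 4) ^ n) 1
  | Khord : Rel k n q (FreeAlgebra.ι k (1 : Fin 4) ^ n)
      ((FreeAlgebra.ι k (0 : Fin 4) ^ (n - 1)) ^ 2)
  | KKh : Rel k n q (FreeAlgebra.ι k (0 : Fin 4) * FreeAlgebra.ι k (1 : Fin 4))
      (FreeAlgebra.ι k (1 : Fin 4) * FreeAlgebra.ι k (0 : Fin 4))
  | KE : Rel k n q
      (FreeAlgebra.ι k (0 : Fin 4) * FreeAlgebra.ι k (2 : Fin 4) *
        FreeAlgebra.ι k (0 : Fin 4) ^ (n - 1))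
      (q ^ n • FreeAlgebra.ι k (2 : Fin 4))
  | KF : Rel k n q
      (FreeAlgebra.ι k (0 : Fin 4) * FreeAlgebra.ι k (3 : Fin 4) *
        FreeAlgebra.ι k (0 : Fin 4) ^ (n - 1))
      ((q ^ n)⁻¹ • FreeAlgebra.ι k (3 : Fin 4))
  | KhE : Rel k n q
      (FreeAlgebra.ι k (1 : Fin 4) * FreeAlgebra.ι k (2 : Fin 4) *
        FreeAlgebra.ι k (1 : Fin 4) ^ (n ^ 2 - 1))
      ((q ^ n * (q ^ 2)⁻¹) • FreeAlgebra.ι k (2 : Fin 4))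
  | KhF : Rel k n q
      (FreeAlgebra.ι k (1 : Fin 4) * FreeAlgebra.ι k (3 : Fin 4) *
        FreeAlgebra.ι k (1 : Fin 4) ^ (n ^ 2 - 1))
      (((q ^ n)⁻¹ * q ^ 2) • FreeAlgebra.ι k (3 : Fin 4))
  | Enil : Rel k n q (FreeAlgebra.ι k (2 : Fin 4) ^ n ^ 2) 0
  | Fnil : Rel k n q (FreeAlgebra.ι k (3 : Fin 4) ^ n ^ 2) 0
  | EF : Rel k n q
      (FreeAlgebra.ι k (3 : Fin 4) * FreeAlgebra.ι k (2 : Fin 4) -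
        q⁻¹ • (FreeAlgebra.ι k (2 : Fin 4) * FreeAlgebra.ι k (3 : Fin 4)))
      (1 - FreeAlgebra.ι k (0 : Fin 4) ^ (n - 1) * FreeAlgebra.ι k (1 : Fin 4))

/-- The algebra `ũ_q(sl₂)` as the quotient of the free algebra by the defining relations. -/
abbrev U (k : Type) [Field k] (n : ℕ) (q : k) := RingQuot (Rel k n q)

variable (k : Type) [Field k] (n : ℕ) (q : k)

def K : U k n q := RingQuot.mkAlgHom k (Rel k n q) (FreeAlgebra.ι k (0 : Fin 4))
def Kh : U k n q := RingQuot.mkAlgHom k (Rel k n q) (FreeAlgebra.ι k (1 : Fin 4))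
def E : U k n q := RingQuot.mkAlgHom k (Rel k n q) (FreeAlgebra.ι k (2 : Fin 4))
def F : U k n q := RingQuot.mkAlgHom k (Rel k n q) (FreeAlgebra.ι k (3 : Fin 4))

/-- `K⁻¹ = K^(n-1)`. -/
def Kinv : U k n q := K k n q ^ (n - 1)
/-- `K̂⁻¹ = K̂^(n²-1)`. -/
def Khinv : U k n q := Kh k n q ^ (n ^ 2 - 1)

/-- `φ_{2i} = (2/n²) Σ_{t<n²/2} q^{-2it} (K⁻¹K̂)^t`. -/
def phi (i : ℕ) : U k n q :=
  ((n ^ 2 : k)⁻¹ * 2) • ∑ t ∈ Finset.range (n ^ 2 / 2),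
    (q⁻¹ ^ (2 * i * t)) • (Kinv k n q * Kh k n q) ^ t

/-- `𝟙₀ = (1/2)(1 + KK̂^(n/2))` and `𝟙₁ = (1/2)(1 - KK̂^(n/2))`. -/
def oneJ (j : ℕ) : U k n q :=
  if j = 0 then (2 : k)⁻¹ • (1 + K k n q * Kh k n q ^ (n / 2))
  else (2 : k)⁻¹ • (1 - K k n q * Kh k n q ^ (n / 2))

/-- The idempotent `e_{2i,j} = φ_{2i} 𝟙_j`. -/
def eIdem (i j : ℕ) : U k n q := phi k n q i * oneJ k n q j

/-- `α_{2i,j} = F^(n²-1) e_{2i,j}`. -/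
def alpha (i j : ℕ) : U k n q := F k n q ^ (n ^ 2 - 1) * eIdem k n q i j

/-- `β_{2i,j} = E^(2i-2) α_{2i,j}`. -/
def beta (i j : ℕ) : U k n q := E k n q ^ (2 * i - 2) * alpha k n q i j

/-- The Gaussian number `s_q = 1 + q + ⋯ + q^(s-1)`. -/
def gauss (x : k) (s : ℕ) : k := ∑ t ∈ Finset.range s, x ^ t

/-- The span of the PBW-type monomials `F^a K^c K̂^d E^b` with `a ≤ n²-2`, `b ≤ n²-1`,
`c ≤ n-1`, `d ≤ n²-1`. -/
def pbw : Submodule k (U k n q) :=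
  Submodule.span k {x | ∃ a b c d : ℕ, a ≤ n ^ 2 - 2 ∧ b ≤ n ^ 2 - 1 ∧ c ≤ n - 1 ∧
    d ≤ n ^ 2 - 1 ∧ x = F k n q ^ a * K k n q ^ c * Kh k n q ^ d * E k n q ^ b}

/-- `γ_{2i,j}`: the unique element of the PBW span with `F·γ = β_{2i,j}`. -/
def gam (i j : ℕ) : U k n q :=
  @dite _ (∃! x, x ∈ pbw k n q ∧ F k n q * x = beta k n q i j)
    (Classical.propDecidable _) (fun h => h.choose) (fun _ => 0)

/-- The left ideal `P_{2i,j} = u·γ_{2i,j}`. -/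
def P (i j : ℕ) : Submodule (U k n q) (U k n q) :=
  Submodule.span (U k n q) {gam k n q i j}

/-- `S_{2i,j} = Soc(P_{2i,j})`, the sum of all simple submodules of `P_{2i,j}`. -/
def S (i j : ℕ) : Submodule (U k n q) (U k n q) :=
  sSup {N : Submodule (U k n q) (U k n q) | N ≤ P k n q i j ∧ IsSimpleModule (U k n q) N}

end QFL

namespace QFLaux

open Finset

/-- Relations in terms of `g = K⁻¹K̂` and `s = KK̂^(n/2)`, without nilpotency of `E`. -/
structure QS0 {k A : Type*} [Field k] [Ring A] [Algebra k A] (h N : ℕ) (q : k)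
    (g s E F : A) : Prop where
  gh : g ^ h = 1
  ss : s * s = 1
  gs : g * s = s * g
  gE : g * E = (q⁻¹ ^ 2) • (E * g)
  gF : g * F = (q ^ 2) • (F * g)
  sE : s * E = (-1 : k) • (E * s)
  sF : s * F = (-1 : k) • (F * s)
  FE : F * E = q⁻¹ • (E * F) + 1 - g
  FN : F ^ N = 0

structure QS {k A : Type*} [Field k] [Ring A] [Algebra k A] (h N : ℕ) (q : k)
    (g s E F : A) : Prop extends QS0 h N q g s E F where
  EN : E ^ N = 0

section alg
set_option linter.unusedSectionVars false
variable {k A : Type*} [Field k] [Ring A] [Algebra k A]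

lemma comm_pow_right {x y : A} {c : k} (h : x * y = c • (y * x)) (m : ℕ) :
    x * y ^ m = c ^ m • (y ^ m * x) := by
  induction m with
  | zero => simp
  | succ m ih =>
    rw [pow_succ, ← mul_assoc, ih, smul_mul_assoc, mul_assoc, h, mul_smul_comm, smul_smul,
      ← mul_assoc, pow_succ]

lemma comm_pow_left {x y : A} {c : k} (h : x * y = c • (y * x)) (m : ℕ) :
    x ^ m * y = c ^ m • (y * x ^ m) := by
  induction m with
  | zero => simp
  | succ m ih =>
    rw [pow_succ, mul_assoc, h, mul_smul_comm, ← mul_assoc, ih, smul_mul_assoc, smul_smul,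
      mul_assoc, pow_succ c, mul_comm c]

lemma comm_pow_pow {x y : A} {c : k} (h : x * y = c • (y * x)) (m r : ℕ) :
    x ^ m * y ^ r = (c ^ m) ^ r • (y ^ r * x ^ m) :=
  comm_pow_right (comm_pow_left h m) r

/-- coefficients -/
def cf (q l : k) (m : ℕ) : k :=
  q⁻¹ ^ m * (∑ t ∈ range (m + 1), q ^ t) * (1 - q⁻¹ ^ m * l)

variable {h N : ℕ} {q : k} {g s E F : A}

lemma FEpow (H : QS0 h N q g s E F) (hq : q ≠ 0) (m : ℕ) :
    F * E ^ (m + 1) = q⁻¹ ^ (m + 1) • (E ^ (m + 1) * F) +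
      (q⁻¹ ^ m * (∑ t ∈ range (m + 1), q ^ t)) • (E ^ m * (1 - q⁻¹ ^ m • g)) := by
  induction m with
  | zero => simp [H.FE, add_sub_assoc]
  | succ m ih =>
    have e1 : q⁻¹ ^ (m+1) * (∑ t ∈ range (m + 2), q ^ t) =
        q⁻¹ ^ (m+1) + q⁻¹ ^ m * (∑ t ∈ range (m + 1), q ^ t) := by
      rw [geom_sum_succ]
      linear_combination (q⁻¹ ^ m * ∑ t ∈ range (m + 1), q ^ t) * mul_inv_cancel₀ hq
    have e2 : q⁻¹ ^ (m+1) * (∑ t ∈ range (m + 2), q ^ t) * q⁻¹ ^ (m+1) =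
        q⁻¹ ^ (m+1) + q⁻¹ ^ m * (∑ t ∈ range (m + 1), q ^ t) * (q⁻¹ ^ m * q⁻¹ ^ 2) := by
      rw [sum_range_succ _ (m+1)]
      have hp : q ^ (m+1) * q⁻¹ ^ (m+1) = 1 := by rw [← mul_pow, mul_inv_cancel₀ hq, one_pow]
      linear_combination q⁻¹ ^ (m+1) * hp
    rw [pow_succ E (m+1), ← mul_assoc, ih, add_mul, smul_mul_assoc, smul_mul_assoc, mul_assoc, H.FE,
      mul_assoc (E^m), sub_mul, smul_mul_assoc, H.gE, mul_sub (E^(m+1)) 1, mul_smul_comm _ (E^(m+1)) g,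
      smul_sub (q⁻¹ ^ (m+1) * _), smul_smul (q⁻¹ ^ (m+1) * _), e2, e1]
    simp only [mul_add, mul_sub, smul_add, smul_sub, mul_smul_comm, smul_smul, mul_one, one_mul,
      add_smul, pow_succ E, mul_assoc]
    rw [← pow_succ]
    abel

lemma EFpow (H : QS0 h N q g s E F) (hq : q ≠ 0) (m : ℕ) :
    ∃ c d : k, E * F ^ (m + 1) = q ^ (m + 1) • (F ^ (m + 1) * E) + F ^ m * (c • 1 + d • g) := by
  have hEF : E * F = q • (F * E) - q • 1 + q • g := by
    rw [H.FE, smul_sub, smul_add, smul_smul, mul_inv_cancel₀ hq, one_smul]; abel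
  induction m with
  | zero =>
    refine ⟨-q, q, ?_⟩
    simp [hEF, sub_eq_add_neg, add_assoc]
  | succ m ih =>
    obtain ⟨c, d, ih⟩ := ih
    refine ⟨c - q ^ (m+1) * q, d * q ^ 2 + q ^ (m+1) * q, ?_⟩
    rw [pow_succ F (m+1), ← mul_assoc, ih, add_mul, smul_mul_assoc, mul_assoc, hEF,
      mul_assoc (F^m), add_mul, smul_mul_assoc, smul_mul_assoc, H.gF]
    simp only [mul_add, mul_sub, smul_add, smul_sub, mul_smul_comm, smul_smul, mul_one, one_mul,
      add_smul, sub_smul, pow_succ F, mul_assoc]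
    rw [← pow_succ]
    abel

lemma E_F_mem (H : QS0 h N q g s E F) (hq : q ≠ 0) (m a : ℕ) (x : A) :
    ∃ y, E ^ m * (F ^ (m + a) * x) = F ^ a * y := by
  induction m generalizing x with
  | zero => exact ⟨x, by simp⟩
  | succ m ih =>
    obtain ⟨c, d, e⟩ := EFpow H hq (m + a)
    obtain ⟨y, hy⟩ := ih (q ^ (m+a+1) • (F * (E * x)) + (c • x + d • (g * x)))
    refine ⟨y, ?_⟩
    rw [← hy, pow_succ, mul_assoc, show m + 1 + a = m + a + 1 by ring, ← mul_assoc E, e]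
    congr 1
    simp only [mul_add, add_mul, smul_mul_assoc, mul_smul_comm, one_mul, mul_assoc, pow_succ]

end alg

section mod
set_option linter.unusedSectionVars false
variable {k A M : Type*} [Field k] [Ring A] [Algebra k A] [AddCommGroup M] [Module k M]
  [Module A M] [IsScalarTower k A M]

instance smulcomm_kA : SMulCommClass A k M := IsScalarTower.to_smulCommClass' 

variable {h N : ℕ} {q : k} {g s E F : A}

lemma F_E_v (H : QS0 h N q g s E F) (hq : q ≠ 0) {v : M} {l : k} (hv : g • v = l • v) (m : ℕ) :
    F • E ^ (m+1) • v = q⁻¹ ^ (m+1) • E ^ (m+1) • F • v + cf q l m • E ^ m • v := by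
  rw [smul_smul, FEpow H hq, add_smul, smul_assoc, mul_smul, smul_assoc (_ * _ : k),
    mul_smul (E ^ m), sub_smul,
    smul_assoc, hv, one_smul, smul_smul, cf, mul_smul _ (1 - q⁻¹ ^ m * l), sub_smul, one_smul,
    smul_sub, smul_comm (E^m), smul_comm (E^m) l, smul_smul (q⁻¹ ^ m) l]

lemma weight_E {x : A} {c : k} (hx : x * E = c • (E * x)) {v : M} {l : k} (hv : x • v = l • v)
    (m : ℕ) : x • E ^ m • v = (c ^ m * l) • E ^ m • v := by
  rw [smul_smul, comm_pow_right hx, smul_assoc, mul_smul, hv, smul_comm (E^m), smul_smul]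

/-- `Φ_v(y) = Σ_{b<N} y_b E^b v` -/
def Phi (N : ℕ) (E : A) (v : M) : (ℕ → k) →ₗ[k] M :=
  ∑ b ∈ range N, (LinearMap.proj b : (ℕ → k) →ₗ[k] k).smulRight (E ^ b • v)

lemma Phi_apply (N : ℕ) (E : A) (v : M) (y : ℕ → k) :
    Phi N E v y = ∑ b ∈ range N, y b • E ^ b • v := by
  simp [Phi]

lemma Phi_congr {N : ℕ} {E : A} {v : M} {y y' : ℕ → k} (hy : ∀ b < N, y b = y' b) :
    Phi N E v y = Phi N E v y' := by
  rw [Phi_apply, Phi_apply]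
  exact sum_congr rfl fun b hb => by rw [hy b (mem_range.1 hb)]

lemma E_Phi {N : ℕ} {E : A} (hE : E ^ N = 0) (v : M) (y : ℕ → k) :
    E • Phi N E v y = Phi N E v (fun b => if b = 0 then 0 else y (b - 1)) := by
  rw [Phi_apply, Phi_apply]
  rcases N with _ | N
  · simp
  rw [sum_range_succ, sum_range_succ', smul_add, smul_comm E, smul_smul E, ← pow_succ', hE]
  simp only [zero_smul, smul_zero, add_zero, if_true, smul_sum, Nat.add_sub_cancel]
  refine sum_congr rfl fun b _ => ?_
  rw [smul_comm E, smul_smul E, ← pow_succ']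
  simp

lemma diag_Phi {N : ℕ} {E x : A} {c l : k} (hx : x * E = c • (E * x)) {v : M}
    (hv : x • v = l • v) (y : ℕ → k) :
    x • Phi N E v y = Phi N E v (fun b => y b * (c ^ b * l)) := by
  rw [Phi_apply, Phi_apply, smul_sum]
  refine sum_congr rfl fun b _ => ?_
  rw [smul_comm x, weight_E hx hv, smul_smul]

lemma cf_last {q l : k} (hq : IsPrimitiveRoot q N) (hN : 1 < N) : cf q l (N - 1) = 0 := by
  rw [cf, Nat.sub_add_cancel hN.le, hq.geom_sum_eq_zero hN]; simp

lemma F_Phi (H : QS0 h N q g s E F) (hq : IsPrimitiveRoot q N) (hN : 1 < N) {v : M} {l : k}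
    (hv : g • v = l • v) (y : ℕ → k) :
    F • Phi N E v y = Phi N E v (fun b => y (b + 1) * cf q l b) +
      Phi N E (F • v) (fun b => y b * q⁻¹ ^ b) := by
  have hq0 : q ≠ 0 := hq.ne_zero (by omega)
  have key : Phi N E v (fun b => y (b + 1) * cf q l b) =
      ∑ b ∈ range (N - 1), (y (b + 1) * cf q l b) • E ^ b • v := by
    rw [Phi_apply]
    conv_lhs => rw [← Nat.sub_add_cancel hN.le, sum_range_succ]
    rw [cf_last hq hN]; simp
  rw [key, Phi_apply, Phi_apply]
  obtain ⟨N', rfl⟩ : ∃ N', N = N' + 1 := ⟨N - 1, by omega⟩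
  rw [sum_range_succ', sum_range_succ' _ N', smul_add, smul_sum, Nat.add_sub_cancel, ← add_assoc,
    ← sum_add_distrib]
  congr 1
  · refine sum_congr rfl fun b _ => ?_
    rw [smul_comm F, F_E_v H hq0 hv, smul_add, smul_smul (y (b+1)), smul_smul (y (b+1)), add_comm]
  · rw [smul_comm F]; simp

lemma Phi_indep {N D : ℕ} {E : A} {v : M} (hD : E ^ D • v ≠ 0) (hD1 : E ^ (D+1) • v = 0)
    {y : ℕ → k} (hy : Phi N E v y = 0) : ∀ b < N, b ≤ D → y b = 0 := by
  intro b
  induction b using Nat.strong_induction_on with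
  | _ b ih =>
    intro hbN hbD
    have h1 : E ^ (D - b) • Phi N E v y = 0 := by rw [hy, smul_zero]
    rw [Phi_apply, smul_sum, sum_eq_single b] at h1
    · rw [smul_comm _ (y b), smul_smul, ← pow_add, Nat.sub_add_cancel hbD] at h1
      exact (smul_eq_zero.1 h1).resolve_right hD
    · intro c hc hcb
      rcases lt_or_gt_of_ne hcb with h2 | h2
      · rw [ih c h2 (by omega) (by omega)]; simp
      · rw [smul_comm _ (y c), smul_smul, ← pow_add,
          show D - b + c = (c - b - 1) + (D + 1) by omega, pow_add, mul_smul, hD1]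
        simp
    · intro h; exact absurd (mem_range.2 hbN) h

lemma gsum_ne {q : k} (hq : IsPrimitiveRoot q N) {m : ℕ} (hm : m + 1 < N) :
    (∑ t ∈ range (m + 1), q ^ t) ≠ 0 := by
  intro h0
  have := geom_sum_mul q (m+1)
  rw [h0, zero_mul] at this
  exact hq.pow_ne_one_of_pos_of_lt (by omega) hm (sub_eq_zero.1 this.symm)

/-- nonvanishing of the coefficient for weight `q^r` -/
lemma cf_ne {q : k} (hq : IsPrimitiveRoot q N) {m r : ℕ} (hm : m + 1 < N)
    (hr : ¬ m ≡ r [MOD N]) : cf q (q ^ r) m ≠ 0 := by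
  have hq0 : q ≠ 0 := hq.ne_zero (by omega)
  refine mul_ne_zero (mul_ne_zero (by positivity) (gsum_ne hq hm)) ?_
  intro h0
  apply hr
  have h1 : q ^ m = q ^ r := by
    have hp : q ^ m * q⁻¹ ^ m = 1 := by rw [← mul_pow, mul_inv_cancel₀ hq0, one_pow]
    linear_combination q ^ m * h0 + q ^ r * hp
  rw [hq.eq_orderOf]
  exact (isOfFinOrder_iff_pow_eq_one.2 ⟨N, by omega, hq.pow_eq_one⟩).pow_eq_pow_iff_modEq.1 h1

lemma cf_eq {q : k} (hq0 : q ≠ 0) (m : ℕ) : cf q (q ^ m) m = 0 := by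
  rw [cf, inv_pow, inv_mul_cancel₀ (pow_ne_zero _ hq0)]; simp

lemma FE_prod (H : QS0 h N q g s E F) (hq : q ≠ 0) {v : M} {l : k} (hv : g • v = l • v)
    (hF : F • v = 0) (m : ℕ) : F ^ m • E ^ m • v = (∏ b ∈ range m, cf q l b) • v := by
  induction m with
  | zero => simp
  | succ m ih =>
    rw [pow_succ F, mul_smul, F_E_v H hq hv, hF, smul_zero, smul_zero, zero_add, smul_comm, ih,
      smul_smul, prod_range_succ, mul_comm]

lemma exists_F_killed {F : A} (hF : F ^ N = 0) {v : M} (hv : v ≠ 0) :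
    ∃ m, F ^ m • v ≠ 0 ∧ F • F ^ m • v = 0 := by
  classical
  have hex : ∃ m, F ^ m • v = 0 := ⟨N, by simp [hF]⟩
  have h0 : Nat.find hex ≠ 0 := by
    intro h; have := Nat.find_spec hex; rw [h] at this; simp at this; exact hv this
  refine ⟨Nat.find hex - 1, Nat.find_min hex (by omega), ?_⟩
  rw [smul_smul, ← pow_succ', Nat.sub_add_cancel (by omega)]
  exact Nat.find_spec hex

end mod

end QFLaux
namespace QFLaux
open Finset
section core
set_option linter.unusedSectionVars false
variable {k A M : Type*} [Field k] [Ring A] [Algebra k A] [AddCommGroup M] [Module k M]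
  [Module A M] [IsScalarTower k A M]
  {h N : ℕ} {q : k} {g s E F : A}

/-- the data of the two generating vectors of `P` -/
structure Core (N : ℕ) (q : k) (g E F : A) (i : ℕ) (al ga : M) : Prop where
  hi : 1 ≤ i
  hi2 : 2 * i ≤ N
  Fal : F • al = 0
  gal : g • al = q ^ (2 * i - 2) • al
  Fga : F • ga = E ^ (2 * i - 2) • al
  gga : g • ga = q ^ (N - 2 * i) • ga
  nz : E ^ (N - 1) • al ≠ 0

/-- shifting -/
def shf (r : ℕ) (x : ℕ → k) : ℕ → k := fun b => if b < r then 0 else x (b - r)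

lemma Phi_shift {E : A} (hE : E ^ N = 0) (r : ℕ) (v : M) (x : ℕ → k) :
    Phi N E (E ^ r • v) x = Phi N E v (shf r x) := by
  induction r with
  | zero =>
    rw [pow_zero, one_smul]
    exact Phi_congr fun b _ => by simp [shf]
  | succ r ih =>
    have : Phi N E (E ^ (r+1) • v) x = E • Phi N E (E ^ r • v) x := by
      rw [Phi_apply, Phi_apply, smul_sum]
      refine sum_congr rfl fun b _ => ?_
      rw [smul_comm E, smul_smul, smul_smul, smul_smul, ← pow_add, ← pow_succ', ← pow_add]
      congr 3; ring
    rw [this, ih, E_Phi hE]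
    refine Phi_congr fun b _ => ?_
    simp only [shf]
    rcases b with _ | b
    · simp
    · simp

variable {i : ℕ} {al ga : M}

lemma Core.F_w (H : QS h N q g s E F) (hq : IsPrimitiveRoot q N) (hN : 1 < N)
    (C : Core N q g E F i al ga) (x y : ℕ → k) :
    F • (Phi N E ga x + Phi N E al y) =
      Phi N E ga (fun b => x (b + 1) * cf q (q ^ (N - 2 * i)) b) +
      Phi N E al (shf (2 * i - 2) (fun b => x b * q⁻¹ ^ b) +
        fun b => y (b + 1) * cf q (q ^ (2 * i - 2)) b) := by
  have hz : ∀ x : ℕ → k, Phi N E (0 : M) x = 0 := fun x => by simp [Phi_apply]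
  rw [smul_add, F_Phi H.toQS0 hq hN C.gga, F_Phi H.toQS0 hq hN C.gal, C.Fal, C.Fga,
    Phi_shift H.EN, hz, map_add]
  abel

lemma Core.al_indep (H : QS h N q g s E F) (hN : 1 < N)
    (C : Core N q g E F i al ga) {y : ℕ → k} (hy : Phi N E al y = 0) : ∀ b < N, y b = 0 := by
  intro b hb
  refine Phi_indep C.nz ?_ hy b hb (by omega)
  rw [Nat.sub_add_cancel hN.le, H.EN, zero_smul]

lemma Core.aux (H : QS h N q g s E F) (hq : IsPrimitiveRoot q N) (hN : 1 < N)
    (C : Core N q g E F i al ga) {x y : ℕ → k}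
    (hx : ∀ b < N, x (b + 1) * cf q (q ^ (N - 2 * i)) b = 0)
    (hxy : Phi N E al (shf (2 * i - 2) (fun b => x b * q⁻¹ ^ b) +
        fun b => y (b + 1) * cf q (q ^ (2 * i - 2)) b) = 0) : ∀ b < N, x b = 0 := by
  have hq0 : q ≠ 0 := hq.ne_zero (by omega)
  have hi := C.hi
  have hi2 := C.hi2
  have h1 := C.al_indep H hN hxy
  have hx0 : x 0 = 0 := by
    have := h1 (2 * i - 2) (by omega)
    simpa [shf, cf_eq hq0] using this
  have hx1 : x (N - 2 * i + 1) = 0 := by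
    have := h1 (N - 1) (by omega)
    rw [Pi.add_apply, cf_last hq hN, mul_zero, add_zero, shf, if_neg (by omega),
      show N - 1 - (2 * i - 2) = N - 2 * i + 1 by omega] at this
    exact (mul_eq_zero.1 this).resolve_right (by positivity)
  intro b hb
  rcases b with _ | b
  · exact hx0
  by_cases hb2 : b = N - 2 * i
  · rw [hb2, hx1]
  · refine (mul_eq_zero.1 (hx b (by omega))).resolve_right (cf_ne hq hb ?_)
    intro hm
    exact hb2 (Nat.ModEq.eq_of_lt_of_lt hm (by omega) (by omega))

lemma Core.ga_indep (H : QS h N q g s E F) (hq : IsPrimitiveRoot q N) (hN : 1 < N)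
    (C : Core N q g E F i al ga) (B : ℕ) : ∀ {x y : ℕ → k} (_ : ∀ b, B ≤ b → x b = 0)
    (_ : Phi N E ga x + Phi N E al y = 0), ∀ b < N, x b = 0 := by
  induction B with
  | zero => intro x y hx _ b _; exact hx b (Nat.zero_le _)
  | succ B ih =>
    intro x y hx hxy
    have h1 := C.F_w H hq hN x y
    rw [hxy, smul_zero] at h1
    have h2 := ih (fun b hb => by rw [hx (b+1) (by omega), zero_mul]) h1.symm
    refine C.aux H hq hN (y := y) h2 ?_
    rw [Phi_congr (y' := 0) h2, map_zero, zero_add] at h1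
    exact h1.symm

lemma Core.gz (H : QS h N q g s E F) (hq : IsPrimitiveRoot q N) (hN : 1 < N)
    (C : Core N q g E F i al ga) :
    g • E ^ (2 * i - 1) • al = q ^ (N - 2 * i) • E ^ (2 * i - 1) • al := by
  have hq0 : q ≠ 0 := hq.ne_zero (by omega)
  have hi := C.hi
  have hi2 := C.hi2
  rw [weight_E H.gE C.gal]
  congr 1
  have e1 : q⁻¹ ^ (2 * (2 * i - 1)) * q ^ (2 * (2 * i - 1)) = 1 := by
    rw [← mul_pow, inv_mul_cancel₀ hq0, one_pow]
  have e2 : q ^ (N - 2 * i) * q ^ (2 * (2 * i - 1)) = q ^ (2 * i - 2) := by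
    rw [← pow_add, show N - 2 * i + 2 * (2 * i - 1) = N + (2 * i - 2) by omega, pow_add,
      hq.pow_eq_one, one_mul]
  rw [← e2, ← pow_mul]
  linear_combination q ^ (N - 2 * i) * e1

lemma Core.Fz (H : QS h N q g s E F) (hq : IsPrimitiveRoot q N) (hN : 1 < N)
    (C : Core N q g E F i al ga) : F • E ^ (2 * i - 1) • al = 0 := by
  have hq0 : q ≠ 0 := hq.ne_zero (by omega)
  have hi := C.hi
  rw [show 2 * i - 1 = (2 * i - 2) + 1 by omega, F_E_v H.toQS0 hq0 C.gal, C.Fal,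
    cf_eq hq0]; simp

lemma Core.z_nz (C : Core N q g E F i al ga) :
    E ^ (N - 2 * i) • E ^ (2 * i - 1) • al ≠ 0 := by
  have hi := C.hi
  have hi2 := C.hi2
  rw [smul_smul, ← pow_add, show N - 2 * i + (2 * i - 1) = N - 1 by omega]
  exact C.nz

lemma Core.z_z (H : QS h N q g s E F) (C : Core N q g E F i al ga) :
    E ^ (N - 2 * i + 1) • E ^ (2 * i - 1) • al = 0 := by
  have hi := C.hi
  have hi2 := C.hi2
  rw [smul_smul, ← pow_add, show N - 2 * i + 1 + (2 * i - 1) = N by omega, H.EN, zero_smul]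

lemma prod_cf_ne (hq : IsPrimitiveRoot q N) {i : ℕ} (hi : 1 ≤ i) (hi2 : 2 * i ≤ N) :
    (∏ b ∈ range (N - 2 * i), cf q (q ^ (N - 2 * i)) b) ≠ 0 := by
  rw [prod_ne_zero_iff]
  intro b hb
  rw [mem_range] at hb
  refine cf_ne hq (by omega) fun hm => ?_
  have := Nat.ModEq.eq_of_lt_of_lt hm (by omega) (by omega)
  omega

lemma Core.main (H : QS h N q g s E F) (hq : IsPrimitiveRoot q N) (hN : 1 < N)
    (C : Core N q g E F i al ga) {x y : ℕ → k} (hw : Phi N E ga x + Phi N E al y ≠ 0)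
    (hF : F • (Phi N E ga x + Phi N E al y) = 0) :
    ∃ a : A, a • (Phi N E ga x + Phi N E al y) = E ^ (2 * i - 1) • al := by
  have hq0 : q ≠ 0 := hq.ne_zero (by omega)
  have hi := C.hi
  have hi2 := C.hi2
  have h1 := C.F_w H hq hN x y
  rw [hF] at h1
  have h2 : ∀ b < N, x (b + 1) * cf q (q ^ (N - 2 * i)) b = 0 := by
    have e : Phi N E ga (fun b => x (b + 1) * cf q (q ^ (N - 2 * i)) b) =
      Phi N E ga (fun b => if b < N then x (b + 1) * cf q (q ^ (N - 2 * i)) b else 0) :=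
      Phi_congr fun b hb => by rw [if_pos hb]
    rw [e] at h1
    have := C.ga_indep H hq hN N (fun b hb => by rw [if_neg (by omega)]) h1.symm
    intro b hb
    simpa [hb] using this b hb
  rw [Phi_congr (y' := 0) h2, map_zero, zero_add] at h1
  have h3 := C.aux H hq hN h2 h1.symm
  have h4 := C.al_indep H hN h1.symm
  have h5 : ∀ b < N, b ≠ 0 → b ≠ 2 * i - 1 → y b = 0 := by
    intro b hb hb0 hb1
    have := h4 (b - 1) (by omega)
    have h6 : shf (2 * i - 2) (fun b => x b * q⁻¹ ^ b) (b - 1) = 0 := by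
      simp only [shf]
      split_ifs
      · rfl
      · rw [h3 _ (by omega), zero_mul]
    rw [Pi.add_apply, h6, zero_add, Nat.sub_add_cancel (by omega)] at this
    refine (mul_eq_zero.1 this).resolve_right (cf_ne hq (by omega) ?_)
    intro hm
    have := Nat.ModEq.eq_of_lt_of_lt hm (by omega) (by omega)
    omega
  have hw2 : Phi N E ga x + Phi N E al y = y 0 • al + y (2 * i - 1) • E ^ (2 * i - 1) • al := by
    rw [Phi_congr (y' := 0) h3, map_zero, zero_add, Phi_apply,
      ← sum_subset (s₁ := {0, 2 * i - 1})]
    · rw [sum_pair (by omega)]; simp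
    · intro b hb
      simp only [mem_insert, mem_singleton] at hb
      rw [mem_range]; omega
    · intro b hb hb2
      simp only [mem_insert, mem_singleton, not_or] at hb2
      rw [h5 b (mem_range.1 hb) hb2.1 hb2.2, zero_smul]
  rw [hw2] at hw ⊢
  by_cases hy0 : y 0 = 0
  · rw [hy0, zero_smul, zero_add] at hw ⊢
    have : y (2 * i - 1) ≠ 0 := by rintro h; rw [h, zero_smul] at hw; exact hw rfl
    refine ⟨algebraMap k A (y (2 * i - 1))⁻¹, ?_⟩
    rw [algebraMap_smul, smul_smul, inv_mul_cancel₀ this, one_smul]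
  · set z := E ^ (2 * i - 1) • al with hz
    have hgz := C.gz H hq hN
    have hFz := C.Fz H hq hN
    have hEz : E ^ (N - 1) • z = 0 := by
      rw [hz, smul_smul, ← pow_add, show N - 1 + (2 * i - 1) = N + (2 * i - 2) by omega, pow_add,
        H.EN]; simp
    have hp := prod_cf_ne hq hi hi2
    set c := ∏ b ∈ range (N - 2 * i), cf q (q ^ (N - 2 * i)) b with hc
    refine ⟨algebraMap k A (y 0 * c)⁻¹ * (F ^ (N - 2 * i) * E ^ (N - 1)), ?_⟩
    rw [mul_smul, mul_smul, smul_add, smul_comm _ (y (2 * i - 1)), hEz, smul_zero, add_zero,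
      smul_comm _ (y 0), show N - 1 = N - 2 * i + (2 * i - 1) by omega, pow_add, mul_smul, ← hz,
      smul_comm _ (y 0), FE_prod H.toQS0 hq0 hgz hFz, ← hc, algebraMap_smul, smul_smul, smul_smul,
      mul_assoc, inv_mul_cancel₀ (mul_ne_zero hy0 hp), one_smul]

end core
end QFLaux
namespace QFLaux
open Finset

section proj
set_option linter.unusedSectionVars false
variable {k A : Type*} [Field k] [CharZero k] [Ring A] [Algebra k A]

/-- projector -/
def ph (h : ℕ) (q : k) (g : A) (i : ℕ) : A :=
  (h : k)⁻¹ • ∑ t ∈ range h, q⁻¹ ^ (2 * i * t) • g ^ t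

variable {h : ℕ} {q : k} {g : A}

lemma ph_sum (h0 : 0 < h) (hq : IsPrimitiveRoot q (2 * h)) : ∑ i ∈ range h, ph h q g i = 1 := by
  simp only [ph]
  rw [← smul_sum, sum_comm, sum_eq_single 0]
  · have : (h : k) ≠ 0 := by exact_mod_cast h0.ne'
    simp only [mul_zero, pow_zero, one_smul, sum_const, card_range, ← Nat.cast_smul_eq_nsmul k]
    rw [smul_smul, inv_mul_cancel₀ this, one_smul]
  · intro t ht ht0
    rw [mem_range] at ht
    rw [← sum_smul]
    have h1 : ∑ i ∈ range h, q⁻¹ ^ (2 * i * t) = 0 := by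
      have e : ∀ i, q⁻¹ ^ (2 * i * t) = (q⁻¹ ^ (2 * t)) ^ i := fun i => by rw [← pow_mul]; ring_nf
      simp only [e]
      have h2 := geom_sum_mul (q⁻¹ ^ (2 * t)) h
      have h3 : (q⁻¹ ^ (2 * t)) ^ h = 1 := by
        rw [← pow_mul, show 2 * t * h = 2 * h * t by ring, pow_mul, hq.inv.pow_eq_one, one_pow]
      rw [h3, sub_self] at h2
      refine (mul_eq_zero.1 h2).resolve_right ?_
      refine sub_ne_zero.2 ?_
      exact hq.inv.pow_ne_one_of_pos_of_lt (by omega) (by omega)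
    rw [h1, zero_smul]
  · intro h; exact absurd (mem_range.2 h0) h

lemma g_ph (hq0 : q ≠ 0) (hq : q ^ (2 * h) = 1) (hg : g ^ h = 1) (i : ℕ) :
    g * ph h q g i = q ^ (2 * i) • ph h q g i := by
  have e : ∀ t, g * (q⁻¹ ^ (2 * i * t) • g ^ t) =
      q ^ (2 * i) • (q⁻¹ ^ (2 * i * (t + 1)) • g ^ (t + 1)) := by
    intro t
    rw [mul_smul_comm, ← pow_succ', smul_smul]
    congr 1
    rw [mul_add, mul_one, pow_add, mul_left_comm, ← mul_pow, mul_inv_cancel₀ hq0, one_pow, mul_one]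
  have e2 := (sum_range_succ (fun t => q⁻¹ ^ (2 * i * t) • g ^ t) h).symm.trans
    (sum_range_succ' (fun t => q⁻¹ ^ (2 * i * t) • g ^ t) h)
  have e3 : q⁻¹ ^ (2 * i * h) = 1 := by
    rw [show 2 * i * h = 2 * h * i by ring, pow_mul, inv_pow, hq]; simp
  simp only [e3, hg, mul_zero, pow_zero, add_left_inj] at e2
  rw [ph, mul_smul_comm, mul_sum, smul_comm, sum_congr rfl fun t _ => e t, ← smul_sum, ← e2]

lemma ph_smul {M : Type*} [AddCommGroup M] [Module k M] [Module A M] [IsScalarTower k A M]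
    (h0 : 0 < h) (hq0 : q ≠ 0) {v : M} {i : ℕ} (hv : g • v = q ^ (2 * i) • v) :
    ph h q g i • v = v := by
  have e : ∀ t, g ^ t • v = (q ^ (2 * i * t)) • v := by
    intro t
    induction t with
    | zero => simp
    | succ t ih => rw [pow_succ, mul_smul, hv, smul_comm, ih, smul_smul, ← pow_add]; ring_nf
  have h' : (h : k) ≠ 0 := by exact_mod_cast h0.ne'
  rw [ph, smul_assoc, sum_smul]
  have e2 : ∀ t, (q⁻¹ ^ (2 * i * t) • g ^ t) • v = v := by
    intro t
    rw [smul_assoc, e, smul_smul, ← mul_pow, inv_mul_cancel₀ hq0, one_pow, one_smul]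
  simp only [e2, sum_const, card_range, ← Nat.cast_smul_eq_nsmul k]
  rw [smul_smul, inv_mul_cancel₀ h', one_smul]

end proj

section gen
variable {k A M : Type*} [Field k] [Ring A] [Algebra k A] [AddCommGroup M] [Module k M]
  [Module A M] [IsScalarTower k A M]
  {h N : ℕ} {q : k} {g s E F : A}

lemma stable (hgen : Algebra.adjoin k {g, s, E, F} = ⊤) (W : Submodule k M)
    (hg : ∀ w ∈ W, g • w ∈ W) (hs : ∀ w ∈ W, s • w ∈ W) (hE : ∀ w ∈ W, E • w ∈ W)
    (hF : ∀ w ∈ W, F • w ∈ W) (a : A) : ∀ w ∈ W, a • w ∈ W := by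
  have ha : a ∈ Algebra.adjoin k {g, s, E, F} := by rw [hgen]; trivial
  induction ha using Algebra.adjoin_induction with
  | mem x hx =>
    simp only [Set.mem_insert_iff, Set.mem_singleton_iff] at hx
    rcases hx with rfl | rfl | rfl | rfl <;> assumption
  | algebraMap r => intro w hw; rw [algebraMap_smul]; exact W.smul_mem r hw
  | add x y _ _ hx hy => intro w hw; rw [add_smul]; exact W.add_mem (hx w hw) (hy w hw)
  | mul x y _ _ hx hy => intro w hw; rw [mul_smul]; exact hx _ (hy w hw)

lemma lw_span (hgen : Algebra.adjoin k {g, s, E, F} = ⊤) (H : QS h N q g s E F)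
    (hq : IsPrimitiveRoot q N) (hN : 1 < N) {v : M} {l sg : k} (hF : F • v = 0)
    (hg : g • v = l • v) (hs : s • v = sg • v) (a : A) : ∃ y : ℕ → k, a • v = Phi N E v y := by
  have hz : ∀ x : ℕ → k, Phi N E (0 : M) x = 0 := fun x => by simp [Phi_apply]
  have hv : v ∈ LinearMap.range (Phi N E v : (ℕ → k) →ₗ[k] M) := by
    refine ⟨fun b => if b = 0 then 1 else 0, ?_⟩
    rw [Phi_apply, sum_eq_single 0]
    · simp
    · intro b _ hb; simp [hb]
    · intro h; exact absurd (mem_range.2 (by omega)) h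
  have := stable hgen (LinearMap.range (Phi N E v : (ℕ → k) →ₗ[k] M)) ?_ ?_ ?_ ?_ a v hv
  · obtain ⟨y, hy⟩ := this; exact ⟨y, hy.symm⟩
  · rintro _ ⟨y, rfl⟩; rw [diag_Phi H.gE hg]; exact ⟨_, rfl⟩
  · rintro _ ⟨y, rfl⟩; rw [diag_Phi H.sE hs]; exact ⟨_, rfl⟩
  · rintro _ ⟨y, rfl⟩; rw [E_Phi H.EN]; exact ⟨_, rfl⟩
  · rintro _ ⟨y, rfl⟩; rw [F_Phi H.toQS0 hq hN hg, hF, hz, add_zero]; exact ⟨_, rfl⟩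

lemma simple_top [IsSimpleModule A M] {v : M} (hv : v ≠ 0) (w : M) : ∃ a : A, a • v = w :=
  IsSimpleModule.toSpanSingleton_surjective A hv w

lemma lw_simple [IsSimpleModule A M] (hgen : Algebra.adjoin k {g, s, E, F} = ⊤)
    (H : QS h N q g s E F)
    (hq : IsPrimitiveRoot q N) (hN : 1 < N) {i : ℕ} (hi : 1 ≤ i) (hi2 : 2 * i ≤ N)
    {v : M} {sg : k} (hv : v ≠ 0) (hF : F • v = 0)
    (hg : g • v = q ^ (N - 2 * i) • v) (hs : s • v = sg • v) :
    E ^ (N - 2 * i) • v ≠ 0 ∧ E ^ (N - 2 * i + 1) • v = 0 := by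
  have hq0 : q ≠ 0 := hq.ne_zero (by omega)
  constructor
  · intro h0
    have := FE_prod H.toQS0 hq0 hg hF (N - 2 * i)
    rw [h0, smul_zero, eq_comm] at this
    exact smul_ne_zero (prod_cf_ne hq hi hi2) hv this
  · by_contra hne
    have hF' : F • E ^ (N - 2 * i + 1) • v = 0 := by
      rw [F_E_v H.toQS0 hq0 hg, hF, cf_eq hq0]; simp
    obtain ⟨a, ha⟩ := simple_top (A := A) hne v
    obtain ⟨y, hy⟩ := lw_span hgen H hq hN hF' (weight_E H.gE hg _) (weight_E H.sE hs _) a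
    obtain ⟨m, hm, hm2⟩ := exists_F_killed H.EN hv
    apply hm
    have hm3 : E ^ (m + 1) • v = 0 := by rw [pow_succ', mul_smul, hm2]
    rw [← ha, hy, Phi_apply, smul_sum]
    refine sum_eq_zero fun b _ => ?_
    rw [smul_comm _ (y b), smul_smul, smul_smul, ← pow_add, ← pow_add,
      show m + b + (N - 2 * i + 1) = (b + (N - 2 * i)) + (m + 1) by ring, pow_add, mul_smul, hm3]
    simp

lemma ker_le {M' : Type*} [AddCommGroup M'] [Module k M']
    [Module A M'] [IsScalarTower k A M'] [IsSimpleModule A M] [IsSimpleModule A M']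
    (hgen : Algebra.adjoin k {g, s, E, F} = ⊤)
    (H : QS h N q g s E F)
    (hq : IsPrimitiveRoot q N) (hN : 1 < N) {i : ℕ} (hi : 1 ≤ i) (hi2 : 2 * i ≤ N)
    {v : M} {v' : M'} {sg : k} (hv : v ≠ 0) (hF : F • v = 0)
    (hg : g • v = q ^ (N - 2 * i) • v) (hs : s • v = sg • v)
    (hv' : v' ≠ 0) (hF' : F • v' = 0)
    (hg' : g • v' = q ^ (N - 2 * i) • v') (hs' : s • v' = sg • v') (a : A) (ha : a • v = 0) :
    a • v' = 0 := by
  obtain ⟨h1, h2⟩ := lw_simple hgen H hq hN hi hi2 hv hF hg hs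
  obtain ⟨h1', h2'⟩ := lw_simple hgen H hq hN hi hi2 hv' hF' hg' hs'
  obtain ⟨y, hy⟩ := lw_span (M := M × M') hgen H hq hN (v := (v, v'))
    (by ext <;> simp [hF, hF']) (l := q ^ (N - 2 * i)) (by ext <;> simp [hg, hg']) (sg := sg)
    (by ext <;> simp [hs, hs']) a
  have e1 : a • v = Phi N E v y := by
    have := congrArg Prod.fst hy
    simpa [Phi_apply, Prod.fst_sum] using this
  have e2 : a • v' = Phi N E v' y := by
    have := congrArg Prod.snd hy
    simpa [Phi_apply, Prod.snd_sum] using this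
  rw [ha] at e1
  have h3 := Phi_indep h1 h2 e1.symm
  rw [e2, Phi_apply]
  refine sum_eq_zero fun b hb => ?_
  rw [mem_range] at hb
  by_cases hbD : b ≤ N - 2 * i
  · rw [h3 b hb hbD, zero_smul]
  · rw [show b = (b - (N - 2 * i + 1)) + (N - 2 * i + 1) by omega, pow_add, mul_smul, h2']
    simp

lemma iso {M' : Type*} [AddCommGroup M'] [Module k M']
    [Module A M'] [IsScalarTower k A M'] [IsSimpleModule A M] [IsSimpleModule A M']
    (hgen : Algebra.adjoin k {g, s, E, F} = ⊤)
    (H : QS h N q g s E F)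
    (hq : IsPrimitiveRoot q N) (hN : 1 < N) {i : ℕ} (hi : 1 ≤ i) (hi2 : 2 * i ≤ N)
    {v : M} {v' : M'} {sg : k} (hv : v ≠ 0) (hF : F • v = 0)
    (hg : g • v = q ^ (N - 2 * i) • v) (hs : s • v = sg • v)
    (hv' : v' ≠ 0) (hF' : F • v' = 0)
    (hg' : g • v' = q ^ (N - 2 * i) • v') (hs' : s • v' = sg • v') :
    Nonempty (M ≃ₗ[A] M') := by
  have hk : LinearMap.ker (LinearMap.toSpanSingleton A M v) =
      LinearMap.ker (LinearMap.toSpanSingleton A M' v') := by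
    ext a
    simp only [LinearMap.mem_ker, LinearMap.toSpanSingleton_apply]
    exact ⟨ker_le hgen H hq hN hi hi2 hv hF hg hs hv' hF' hg' hs' a,
      ker_le hgen H hq hN hi hi2 hv' hF' hg' hs' hv hF hg hs a⟩
  exact ⟨(LinearMap.quotKerEquivOfSurjective _
      (IsSimpleModule.toSpanSingleton_surjective A hv)).symm.trans
    ((Submodule.quotEquivOfEq _ _ hk).trans (LinearMap.quotKerEquivOfSurjective _
      (IsSimpleModule.toSpanSingleton_surjective A hv')))⟩

lemma exists_lw [CharZero k] [Nontrivial M] (H : QS h (2 * h) q g s E F) (h0 : 0 < h)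
    (hq : IsPrimitiveRoot q (2 * h)) : ∃ (v : M) (i j : ℕ), v ≠ 0 ∧ 1 ≤ i ∧ i ≤ h ∧ j ≤ 1 ∧
      F • v = 0 ∧ g • v = q ^ (2 * h - 2 * i) • v ∧ s • v = ((-1 : k) ^ j) • v := by
  have hq0 : q ≠ 0 := hq.ne_zero (by omega)
  obtain ⟨v0, hv0⟩ := exists_ne (0 : M)
  obtain ⟨m, hm, hm2⟩ := exists_F_killed H.FN hv0
  set v1 := F ^ m • v0 with hv1
  have h1 : ∃ i ∈ range h, ph h q g i • v1 ≠ 0 := by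
    by_contra hcon
    push Not at hcon
    apply hm
    rw [← one_smul A v1, ← ph_sum h0 hq (g := g), sum_smul]
    exact sum_eq_zero hcon
  obtain ⟨i, hi, hi2⟩ := h1
  rw [mem_range] at hi
  set v2 := ph h q g i • v1 with hv2
  have hgv2 : g • v2 = q ^ (2 * i) • v2 := by
    rw [hv2, smul_smul, g_ph hq0 hq.pow_eq_one H.gh, smul_assoc]
  have hFg : F * g = q⁻¹ ^ 2 • (g * F) := by
    rw [H.gF, smul_smul, ← mul_pow, inv_mul_cancel₀ hq0]; simp
  have hFv2 : F • v2 = 0 := by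
    rw [hv2, ph, smul_assoc, sum_smul, smul_comm, smul_sum]
    refine smul_eq_zero_of_right _ (sum_eq_zero fun t _ => ?_)
    rw [smul_assoc, smul_comm, smul_smul F, comm_pow_right hFg, smul_assoc, mul_smul, hm2]
    simp
  have hFs : F * s = -(s * F) := by rw [H.sF]; simp
  have hF1 : F • s • v2 = 0 := by rw [smul_smul, hFs, neg_smul, mul_smul, hFv2]; simp
  have hg1 : g • s • v2 = q ^ (2 * i) • s • v2 := by
    rw [smul_smul, H.gs, mul_smul, hgv2, smul_comm]
  have hss : s • s • v2 = v2 := by rw [smul_smul, H.ss, one_smul]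
  have e : 2 * h - 2 * (h - i) = 2 * i := by omega
  by_cases hp : v2 + s • v2 = 0
  · refine ⟨v2, h - i, 1, hi2, by omega, by omega, by omega, hFv2, by rw [e, hgv2], ?_⟩
    rw [eq_neg_of_add_eq_zero_right hp]; simp
  · refine ⟨v2 + s • v2, h - i, 0, hp, by omega, by omega, by omega, ?_, ?_, ?_⟩
    · rw [smul_add, hFv2, hF1, add_zero]
    · rw [smul_add, hg1, hgv2, smul_add, e]
    · rw [smul_add, hss]; simp [add_comm]

end gen
end QFLaux
namespace QFLaux
open Finset

section rep
variable {k : Type*} [Field k] (N : ℕ)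

abbrev V (k : Type*) [Field k] (N : ℕ) := Fin N × Fin N → k

def ex : V k N →ₗ[k] (ℕ → ℕ → k) where
  toFun f a b := if h : a < N ∧ b < N then f (⟨a, h.1⟩, ⟨b, h.2⟩) else 0
  map_add' f f' := by
    funext a b; by_cases h : a < N ∧ b < N <;> simp [h]
  map_smul' c f := by
    funext a b; by_cases h : a < N ∧ b < N <;> simp [h]

def mkV : (ℕ → ℕ → k) →ₗ[k] V k N where
  toFun f x := f x.1 x.2
  map_add' _ _ := rfl
  map_smul' _ _ := rfl

variable {N}

lemma ex_mkV (f : ℕ → ℕ → k) (a b : ℕ) :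
    ex N (mkV N f) a b = if a < N ∧ b < N then f a b else 0 := by
  by_cases h : a < N ∧ b < N <;> simp [ex, mkV, h]

lemma ex_out (f : V k N) (a b : ℕ) (h : ¬ (a < N ∧ b < N)) : ex N f a b = 0 := by
  simp only [ex, LinearMap.coe_mk, AddHom.coe_mk]
  rw [dif_neg h]

lemma V_ext {f f' : V k N} (h : ∀ a b, a < N → b < N → ex N f a b = ex N f' a b) : f = f' := by
  funext ⟨⟨a, ha⟩, ⟨b, hb⟩⟩
  simpa [ex, ha, hb] using h a b ha hb

/-- coefficients of `E` -/
def ce (q l : k) (a b : ℕ) : k := (∑ t ∈ range a, q ^ t) * (q ^ a * q⁻¹ ^ (2 * b) * l - q)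

variable (N)

def Fop : Module.End k (V k N) where
  toFun f := mkV N fun a b => if a = 0 then 0 else ex N f (a - 1) b
  map_add' f f' := V_ext fun a b ha hb => by
    by_cases h : a = 0 <;> simp [ex_mkV, ha, hb, h]
  map_smul' c f := V_ext fun a b ha hb => by
    by_cases h : a = 0 <;> simp [ex_mkV, ha, hb, h]

def Eop (q l : k) : Module.End k (V k N) where
  toFun f := mkV N fun a b => (if b = 0 then 0 else q ^ a * ex N f a (b - 1)) +
    ce q l (a + 1) b * ex N f (a + 1) b
  map_add' f f' := V_ext fun a b ha hb => by
    have h0 : 0 < N := by omega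
    by_cases h : b = 0 <;> simp [ex_mkV, ha, hb, h, h0] <;> ring
  map_smul' c f := V_ext fun a b ha hb => by
    have h0 : 0 < N := by omega
    by_cases h : b = 0 <;> simp [ex_mkV, ha, hb, h, h0] <;> ring

def dop (w : ℕ → ℕ → k) : Module.End k (V k N) where
  toFun f := mkV N fun a b => w a b * ex N f a b
  map_add' f f' := V_ext fun a b ha hb => by simp [ex_mkV, ha, hb]; ring
  map_smul' c f := V_ext fun a b ha hb => by simp [ex_mkV, ha, hb]; ring

variable {N}

lemma ex_F0 (f : V k N) (b : ℕ) : ex N (Fop N f) 0 b = 0 := by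
  simp [Fop, ex_mkV]

lemma ex_F1 (f : V k N) (a b : ℕ) :
    ex N (Fop N f) (a + 1) b = if a + 1 < N then ex N f a b else 0 := by
  by_cases hb : b < N
  · simp [Fop, ex_mkV, hb]
  · rw [ex_out _ _ _ (by tauto), ex_out _ _ _ (by tauto)]; simp

lemma ex_E0 (q l : k) (f : V k N) (a : ℕ) (ha : a < N) :
    ex N (Eop N q l f) a 0 = ce q l (a + 1) 0 * ex N f (a + 1) 0 := by
  have : 0 < N := by omega
  simp [Eop, ex_mkV, ha, this]

lemma ex_E1 (q l : k) (f : V k N) (a b : ℕ) (ha : a < N) (hb : b + 1 < N) :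
    ex N (Eop N q l f) a (b + 1) = q ^ a * ex N f a b +
      ce q l (a + 1) (b + 1) * ex N f (a + 1) (b + 1) := by
  simp [Eop, ex_mkV, ha, hb]

lemma ex_d (w : ℕ → ℕ → k) (f : V k N) (a b : ℕ) :
    ex N (dop N w f) a b = w a b * ex N f a b := by
  by_cases h : a < N ∧ b < N
  · simp [dop, ex_mkV, h]
  · rw [ex_out _ _ _ h, ex_out _ _ _ h]; simp

lemma ex_Fpow (f : V k N) (m a b : ℕ) (ha : a < N) :
    ex N ((Fop N ^ m) f) a b = if m ≤ a then ex N f (a - m) b else 0 := by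
  induction m generalizing a with
  | zero => simp
  | succ m ih =>
    rw [pow_succ', Module.End.mul_apply]
    rcases a with _ | a
    · rw [ex_F0]; simp
    · rw [ex_F1, if_pos ha, ih a (by omega)]; simp

def gop (N : ℕ) (q l : k) : Module.End k (V k N) :=
  dop N fun a b => q ^ (2 * a) * q⁻¹ ^ (2 * b) * l
def sop (N : ℕ) (sg : k) : Module.End k (V k N) := dop N fun a b => (-1) ^ (a + b) * sg

lemma dpow (w : ℕ → ℕ → k) (f : V k N) (m a b : ℕ) :
    ex N ((dop N w ^ m) f) a b = w a b ^ m * ex N f a b := by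
  induction m with
  | zero => simp
  | succ m ih => rw [pow_succ', Module.End.mul_apply, ex_d, ih]; ring

lemma ce_rel {q : k} (hq0 : q ≠ 0) (l : k) (a b : ℕ) :
    ce q l a b - q⁻¹ * ce q l (a + 1) b = 1 - q ^ (2 * a) * q⁻¹ ^ (2 * b) * l := by
  have h1 : (∑ t ∈ range (a + 1), q ^ t) = q ^ a + ∑ t ∈ range a, q ^ t := by
    rw [sum_range_succ]; ring
  have h2 : (∑ t ∈ range (a + 1), q ^ t) = q * (∑ t ∈ range a, q ^ t) + 1 := geom_sum_succ
  have hp : q⁻¹ * q = 1 := inv_mul_cancel₀ hq0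
  have hS : ∑ t ∈ range a, q ^ t = ∑ t ∈ range (a + 1), q ^ t - q ^ a := by rw [h1]; ring
  simp only [ce]
  set S := ∑ t ∈ range a, q ^ t
  set T := ∑ t ∈ range (a + 1), q ^ t
  set P := q⁻¹ ^ (2 * b)
  rw [pow_succ, show q ^ (2 * a) = q ^ a * q ^ a by rw [← pow_add]; ring_nf]
  linear_combination h2 - q ^ a * P * l * h1 - (T * q ^ a * P * l - T) * hp

lemma ce_N {q : k} (hq : IsPrimitiveRoot q N) (hN : 1 < N) (l : k) (b : ℕ) : ce q l N b = 0 := by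
  rw [ce, hq.geom_sum_eq_zero hN, zero_mul]

lemma ce_0 (q l : k) (b : ℕ) : ce q l 0 b = 0 := by simp [ce]

lemma rep0 {q l sg : k} {h : ℕ} (hNh : N = 2 * h) (hN : 1 < N) (hq : IsPrimitiveRoot q N)
    (hl : l ^ h = 1) (hs : sg * sg = 1) :
    QS0 h N q (gop N q l) (sop N sg) (Eop N q l) (Fop N) := by
  have hq0 : q ≠ 0 := hq.ne_zero (by omega)
  have hp : q * q⁻¹ = 1 := mul_inv_cancel₀ hq0
  have hp2 : q ^ 2 * q⁻¹ ^ 2 = 1 := by rw [← mul_pow, hp, one_pow]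
  constructor
  · refine LinearMap.ext fun f => V_ext fun a b ha hb => ?_
    rw [gop, dpow, mul_pow, mul_pow, hl, ← pow_mul, ← pow_mul,
      show 2 * a * h = N * a by rw [hNh]; ring, show 2 * b * h = N * b by rw [hNh]; ring,
      pow_mul, pow_mul, hq.pow_eq_one, hq.inv.pow_eq_one]
    simp
  · refine LinearMap.ext fun f => V_ext fun a b ha hb => ?_
    rw [Module.End.mul_apply, sop, ex_d, ex_d, Module.End.one_apply]
    have : ((-1 : k) ^ (a + b)) * (-1) ^ (a + b) = 1 := by rw [← mul_pow]; simp
    linear_combination (sg * sg * ex N f a b) * this + ex N f a b * hs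
  · refine LinearMap.ext fun f => V_ext fun a b ha hb => ?_
    simp only [Module.End.mul_apply, sop, gop, ex_d]
    ring
  · refine LinearMap.ext fun f => V_ext fun a b ha hb => ?_
    simp only [Module.End.mul_apply, gop, ex_d, LinearMap.smul_apply, map_smul, Pi.smul_apply,
      smul_eq_mul]
    rcases b with _ | b
    · simp only [ex_E0 _ _ _ _ ha, ex_d]
      linear_combination (-ce q l (a+1) 0 * ex N f (a+1) 0 * q ^ (2 * a) * l) * hp2
    · simp only [ex_E1 _ _ _ _ _ ha hb, ex_d]
      linear_combination (-ce q l (a+1) (b+1) * ex N f (a+1) (b+1) * q ^ (2 * a) * l *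
        q⁻¹ ^ (2 * (b + 1))) * hp2
  · refine LinearMap.ext fun f => V_ext fun a b ha hb => ?_
    simp only [Module.End.mul_apply, gop, ex_d, LinearMap.smul_apply, map_smul, Pi.smul_apply,
      smul_eq_mul]
    rcases a with _ | a
    · simp only [ex_F0]; ring
    · simp only [ex_F1, if_pos ha, ex_d]; ring
  · refine LinearMap.ext fun f => V_ext fun a b ha hb => ?_
    simp only [Module.End.mul_apply, sop, ex_d, LinearMap.smul_apply, map_smul, Pi.smul_apply,
      smul_eq_mul]
    rcases b with _ | b
    · simp only [ex_E0 _ _ _ _ ha, ex_d]; ring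
    · simp only [ex_E1 _ _ _ _ _ ha hb, ex_d]; ring
  · refine LinearMap.ext fun f => V_ext fun a b ha hb => ?_
    simp only [Module.End.mul_apply, sop, ex_d, LinearMap.smul_apply, map_smul, Pi.smul_apply,
      smul_eq_mul]
    rcases a with _ | a
    · simp only [ex_F0]; ring
    · simp only [ex_F1, if_pos ha, ex_d]; ring
  · refine LinearMap.ext fun f => V_ext fun a b ha hb => ?_
    simp only [Module.End.mul_apply, gop, ex_d, LinearMap.smul_apply, LinearMap.add_apply,
      LinearMap.sub_apply, map_smul, map_add, map_sub, Pi.add_apply, Pi.sub_apply, Pi.smul_apply,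
      smul_eq_mul, Module.End.one_apply]
    have key := ce_rel hq0 l a b
    have hc : ce q l (a + 1) b * (if a + 1 < N then ex N f a b else 0) =
        ce q l (a + 1) b * ex N f a b := by
      split_ifs with h1
      · rfl
      · rw [show a + 1 = N by omega, ce_N hq hN]; simp
    rcases a with _ | a
    · rw [ex_F0]
      rw [ce_0] at key
      rcases b with _ | b
      · rw [ex_E0 _ _ _ _ ha, ex_F1, hc]
        linear_combination ex N f 0 0 * key
      · rw [ex_E1 _ _ _ _ _ ha hb, ex_F1, ex_F0, hc]
        linear_combination ex N f 0 (b+1) * key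
    · rw [ex_F1, if_pos ha]
      rcases b with _ | b
      · rw [ex_E0 _ _ _ _ ha, ex_E0 _ _ _ _ (by omega), ex_F1, hc]
        linear_combination ex N f (a+1) 0 * key
      · rw [ex_E1 _ _ _ _ _ ha hb, ex_E1 _ _ _ _ _ (by omega) hb, ex_F1, ex_F1, if_pos ha, hc]
        linear_combination ex N f (a+1) (b+1) * key - q ^ a * ex N f a b * hp
  · refine LinearMap.ext fun f => V_ext fun a b ha hb => ?_
    rw [ex_Fpow _ _ _ _ ha, if_neg (by omega)]; simp

/-- basis vectors -/
def dl (N : ℕ) (a b : ℕ) : V k N := mkV N fun x y => if x = a ∧ y = b then 1 else 0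

lemma ex_dl (a b x y : ℕ) : ex N (dl N a b : V k N) x y =
    if (x < N ∧ y < N) ∧ (x = a ∧ y = b) then 1 else 0 := by
  rw [dl, ex_mkV, ← ite_and]

lemma E_dl (q l : k) (b : ℕ) : Eop N q l (dl N 0 b) = dl N 0 (b + 1) := by
  refine V_ext fun x y hx hy => ?_
  rcases y with _ | y
  · rw [ex_E0 _ _ _ _ hx, ex_dl, ex_dl]; simp
  · rw [ex_E1 _ _ _ _ _ hx hy, ex_dl, ex_dl, ex_dl]
    have : y < N := by omega
    by_cases h0 : x = 0 <;> simp [h0, hx, hy, this]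

lemma Epow_dl (q l : k) (b m : ℕ) : (Eop N q l ^ m) (dl N 0 b) = dl N 0 (b + m) := by
  induction m with
  | zero => simp
  | succ m ih => rw [pow_succ', Module.End.mul_apply, ih, E_dl]; rfl

lemma Fpow_dl (a b : ℕ) : (Fop N ^ a) (dl N 0 b : V k N) = dl N a b := by
  refine V_ext fun x y hx hy => ?_
  rw [ex_Fpow _ _ _ _ hx, ex_dl, ex_dl]
  split_ifs <;> first | rfl | omega

lemma rep {q l sg : k} {h : ℕ} (hNh : N = 2 * h) (hN : 1 < N) (hq : IsPrimitiveRoot q N)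
    (hl : l ^ h = 1) (hs : sg * sg = 1) :
    QS h N q (gop N q l) (sop N sg) (Eop N q l) (Fop N) := by
  have H := rep0 hNh hN hq hl hs
  have hq0 : q ≠ 0 := hq.ne_zero (by omega)
  refine ⟨H, ?_⟩
  have hc := FEpow H hq0 (N - 1)
  rw [Nat.sub_add_cancel hN.le, hq.inv.pow_eq_one, hq.geom_sum_eq_zero hN, mul_zero, zero_smul,
    add_zero, one_smul] at hc
  have hc2 : ∀ a, Eop N q l ^ N * Fop N ^ a = Fop N ^ a * Eop N q l ^ N := fun a =>
    (Commute.pow_left (show Commute (Fop N) (Eop N q l ^ N) from hc) a).eq.symm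
  refine LinearMap.pi_ext fun ⟨⟨a, ha⟩, ⟨b, hb⟩⟩ x => ?_
  have e : (Pi.single ((⟨a, ha⟩, ⟨b, hb⟩) : Fin N × Fin N) x : V k N) =
      x • (Fop N ^ a) (dl N 0 b) := by
    rw [Fpow_dl]
    funext ⟨⟨c, hc⟩, ⟨d, hd⟩⟩
    by_cases h1 : c = a ∧ d = b
    · obtain ⟨rfl, rfl⟩ := h1
      simp [dl, mkV]
    · rw [Pi.single_eq_of_ne]
      · simp [dl, mkV, h1]
      · simpa using h1
  rw [e, map_smul, ← Module.End.mul_apply, hc2, Module.End.mul_apply, Epow_dl]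
  have : (dl N 0 (b + N) : V k N) = 0 := V_ext fun x y hx hy => by
    rw [ex_dl, if_neg (by omega)]; simp
  rw [this]; simp

lemma ex_top (q l : k) (m : ℕ) (f : V k N) (b : ℕ) (hb : b + m < N) :
    ex N ((Eop N q l ^ m) f) (N - 1) (b + m) = (q ^ (N - 1)) ^ m * ex N f (N - 1) b := by
  induction m with
  | zero => simp
  | succ m ih =>
    rw [pow_succ' (Eop N q l), Module.End.mul_apply, ← add_assoc,
      ex_E1 _ _ _ _ _ (by omega) (by omega), ih (by omega),
      ex_out _ (N - 1 + 1) _ (by omega)]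
    ring

lemma top_ne {q : k} (hq0 : q ≠ 0) (hN : 1 < N) (l : k) :
    (Eop N q l ^ (N - 1)) ((Fop N ^ (N - 1)) (dl N 0 0)) ≠ 0 := by
  intro h0
  have := ex_top q l (N - 1) ((Fop N ^ (N - 1)) (dl N 0 0)) 0 (by omega)
  rw [h0, Fpow_dl, ex_dl, if_pos (by omega)] at this
  simp at this
  exact pow_ne_zero _ (pow_ne_zero _ hq0) this.symm

lemma g_dl (q l : k) : gop N q l (dl N 0 0) = l • dl N 0 0 := by
  refine V_ext fun x y hx hy => ?_
  rw [gop, ex_d, map_smul, Pi.smul_apply, Pi.smul_apply, ex_dl]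
  by_cases h : x = 0 ∧ y = 0
  · simp [h]
  · rw [if_neg (by tauto)]; simp

lemma s_dl (sg : k) : sop N sg (dl N 0 0) = sg • dl N 0 0 := by
  refine V_ext fun x y hx hy => ?_
  rw [sop, ex_d, map_smul, Pi.smul_apply, Pi.smul_apply, ex_dl]
  by_cases h : x = 0 ∧ y = 0
  · simp [h]
  · rw [if_neg (by tauto)]; simp

end rep
end QFLaux
namespace QFLaux
open Finset

section big
variable {k A : Type*} [Field k] [Ring A] [Algebra k A]

structure Big (n : ℕ) (q : k) (K Kh E F : A) : Prop where
  Kord : K ^ n = 1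
  Khord : Kh ^ n = (K ^ (n - 1)) ^ 2
  KKh : K * Kh = Kh * K
  KE : K * E * K ^ (n - 1) = q ^ n • E
  KF : K * F * K ^ (n - 1) = (q ^ n)⁻¹ • F
  KhE : Kh * E * Kh ^ (n ^ 2 - 1) = (q ^ n * (q ^ 2)⁻¹) • E
  KhF : Kh * F * Kh ^ (n ^ 2 - 1) = ((q ^ n)⁻¹ * q ^ 2) • F
  Enil : E ^ n ^ 2 = 0
  Fnil : F ^ n ^ 2 = 0
  EF : F * E - q⁻¹ • (E * F) = 1 - K ^ (n - 1) * Kh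

lemma conj_comm {x y xi : A} {c : k} (hx : xi * x = 1) (h : x * y * xi = c • y) :
    x * y = c • (y * x) := by
  have := congrArg (· * x) h
  simpa only [mul_assoc, hx, mul_one, smul_mul_assoc] using this

lemma Big.KhN {n : ℕ} {q : k} {K Kh E F : A} (B : Big n q K Kh E F) : Kh ^ n ^ 2 = 1 := by
  rw [sq, pow_mul, B.Khord, ← pow_mul, ← pow_mul,
    show (n - 1) * (2 * n) = n * ((n - 1) * 2) by ring, pow_mul, B.Kord, one_pow]

lemma pow_red {g : A} {h : ℕ} (hg : g ^ h = 1) (a c : ℕ) : g ^ (a + h * c) = g ^ a := by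
  rw [pow_add, pow_mul, hg, one_pow, mul_one]

lemma half_pow {q : k} {h : ℕ} (h0 : 0 < h) (hq : IsPrimitiveRoot q (2 * h)) : q ^ h = -1 := by
  have h1 : q ^ h * q ^ h = 1 := by rw [← pow_add, ← two_mul, hq.pow_eq_one]
  rcases mul_self_eq_one_iff.1 h1 with h2 | h2
  · exact absurd h2 (hq.pow_ne_one_of_pos_of_lt (by omega) (by omega))
  · exact h2

lemma Big.toQS {r n : ℕ} (hn : n = 4 * (r + 1)) {q : k} (hq : IsPrimitiveRoot q (n ^ 2))
    {K Kh E F : A} (B : Big n q K Kh E F) :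
    QS (8 * (r + 1) ^ 2) (n ^ 2) q (K ^ (n - 1) * Kh) (K * Kh ^ (n / 2)) E F ∧
    K = (K * Kh ^ (n / 2)) * (K ^ (n - 1) * Kh) ^ (4 * r ^ 2 + 6 * r + 2) ∧
    Kh = K * (K ^ (n - 1) * Kh) := by
  have hNh : n ^ 2 = 2 * (8 * (r + 1) ^ 2) := by rw [hn]; ring
  have hq0 : q ≠ 0 := hq.ne_zero (by rw [hNh]; positivity)
  have hn1 : n - 1 + 1 = n := by omega
  have hKi : K ^ (n - 1) * K = 1 := by rw [← pow_succ, hn1, B.Kord]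
  have hiK : K * K ^ (n - 1) = 1 := by rw [← pow_succ', hn1, B.Kord]
  have hN1 : n ^ 2 - 1 + 1 = n ^ 2 := Nat.sub_add_cancel (by rw [hNh]; nlinarith [sq_nonneg r])
  have hKhi : Kh ^ (n ^ 2 - 1) * Kh = 1 := by rw [← pow_succ, hN1, B.KhN]
  have hKE := conj_comm hKi B.KE
  have hKF := conj_comm hKi B.KF
  have hKhE := conj_comm hKhi B.KhE
  have hKhF := conj_comm hKhi B.KhF
  have hC : Commute K Kh := B.KKh
  have hCi : Commute (K ^ (n - 1)) Kh := hC.pow_left _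
  have hhalf : n / 2 = 2 * (r + 1) := by omega
  have hIE : K ^ (n - 1) * E = (q ^ n)⁻¹ • (E * K ^ (n - 1)) := by
    rw [comm_pow_left hKE]
    congr 1
    have : (q ^ n) ^ (n - 1) * q ^ n = 1 := by
      rw [← pow_succ, hn1, ← pow_mul, ← sq, hq.pow_eq_one]
    exact eq_inv_of_mul_eq_one_left this
  have hIF : K ^ (n - 1) * F = (q ^ n) • (F * K ^ (n - 1)) := by
    rw [comm_pow_left hKF]
    congr 1
    have : (q ^ n)⁻¹ ^ (n - 1) * (q ^ n)⁻¹ = 1 := by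
      rw [← pow_succ, hn1, inv_pow, ← pow_mul, ← sq, hq.pow_eq_one, inv_one]
    rw [eq_inv_of_mul_eq_one_left this, inv_inv]
  have hqh : q ^ (8 * (r + 1) ^ 2) = -1 := half_pow (by positivity) (hNh ▸ hq)
  have hI4 : (K ^ (n - 1)) ^ n = 1 := by rw [← pow_mul, mul_comm, pow_mul, B.Kord, one_pow]
  have hqq : q ^ n * (q ^ n * (q ^ 2)⁻¹) ^ (n / 2) = -1 := by
    have h1 : (q ^ 2) ^ (n / 2) = q ^ n := by rw [← pow_mul, hhalf, hn]; ring_nf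
    rw [mul_pow, inv_pow, h1, ← pow_mul, mul_left_comm, mul_inv_cancel₀ (pow_ne_zero _ hq0),
      mul_one, hhalf, hn, ← hqh]
    ring_nf
  refine ⟨⟨⟨?_, ?_, ?_, ?_, ?_, ?_, ?_, ?_, B.Fnil⟩, B.Enil⟩, ?_, ?_⟩
  · rw [hCi.mul_pow, show 8 * (r + 1) ^ 2 = n * (2 * (r + 1)) by rw [hn]; ring,
      pow_mul (K ^ (n - 1)) n, hI4, pow_mul Kh n, B.Khord, ← pow_mul (K ^ (n - 1)),
      show 2 * (2 * (r + 1)) = n by rw [hn]; ring, hI4]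
    simp
  · have : Kh ^ (n / 2) * Kh ^ (n / 2) = K ^ (n - 1) * K ^ (n - 1) := by
      rw [← pow_add, show n / 2 + n / 2 = n by omega, B.Khord, sq]
    rw [mul_assoc, ← mul_assoc (Kh ^ (n / 2)), ← (hC.pow_right (n / 2)).eq, mul_assoc, this,
      ← mul_assoc K (K ^ (n - 1)), hiK, one_mul, hiK]
  · have h1 : Commute (K ^ (n - 1) * Kh) K :=
      ((Commute.refl K).pow_left _).mul_left hC.symm
    have h2 : Commute (K ^ (n - 1) * Kh) Kh := hCi.mul_left (Commute.refl _)
    exact (h1.mul_right (h2.pow_right _)).eq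
  · rw [mul_assoc, hKhE, mul_smul_comm, ← mul_assoc, hIE, smul_mul_assoc, smul_smul, mul_assoc E]
    congr 1
    field_simp
  · rw [mul_assoc, hKhF, mul_smul_comm, ← mul_assoc, hIF, smul_mul_assoc, smul_smul, mul_assoc F]
    congr 1
    field_simp
  · rw [mul_assoc, comm_pow_left hKhE, mul_smul_comm, ← mul_assoc, hKE, smul_mul_assoc, smul_smul,
      mul_assoc, mul_comm, hqq]
  · rw [mul_assoc, comm_pow_left hKhF, mul_smul_comm, ← mul_assoc, hKF, smul_mul_assoc, smul_smul,
      mul_assoc, mul_comm]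
    congr 1
    have : (q ^ n)⁻¹ * ((q ^ n)⁻¹ * q ^ 2) ^ (n / 2) =
        (q ^ n * (q ^ n * (q ^ 2)⁻¹) ^ (n / 2))⁻¹ := by
      rw [mul_inv, ← inv_pow (q ^ n * (q ^ 2)⁻¹), mul_inv (q ^ n) (q ^ 2)⁻¹, inv_inv]
    rw [this, hqq]; norm_num
  · rw [sub_eq_iff_eq_add.1 B.EF]; abel
  · rw [hCi.mul_pow, mul_assoc K, ← mul_assoc (Kh ^ (n / 2)),
      ((hCi.pow_left _).pow_right (n / 2)).eq.symm, mul_assoc, ← pow_add,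
      show n / 2 + (4 * r ^ 2 + 6 * r + 2) = n * (r + 1) by rw [hhalf, hn]; ring, pow_mul Kh,
      B.Khord, ← pow_mul (K ^ (n - 1)), ← pow_add,
      show 4 * r ^ 2 + 6 * r + 2 + 2 * (r + 1) = n * (r + 1) by rw [hn]; ring, pow_mul _ n, hI4]
    simp
  · rw [← mul_assoc, hiK, one_mul]

lemma QS.toBig {r n : ℕ} (hn : n = 4 * (r + 1)) {q : k} (hq : IsPrimitiveRoot q (n ^ 2))
    {g s E F : A} (H : QS (8 * (r + 1) ^ 2) (n ^ 2) q g s E F) {K Kh : A}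
    (hK : K = s * g ^ (4 * r ^ 2 + 6 * r + 2)) (hKh : Kh = s * g ^ (4 * r ^ 2 + 6 * r + 3)) :
    Big n q K Kh E F ∧ K ^ (n - 1) * Kh = g ∧ K * Kh ^ (n / 2) = s := by
  have hNh : n ^ 2 = 2 * (8 * (r + 1) ^ 2) := by rw [hn]; ring
  have hq0 : q ≠ 0 := hq.ne_zero (by rw [hNh]; positivity)
  have hn1 : n - 1 + 1 = n := by omega
  have hC : Commute s g := H.gs.symm
  have hqh : q ^ (8 * (r + 1) ^ 2) = -1 := half_pow (by positivity) (hNh ▸ hq)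
  have hKg : Kh = K * g := by rw [hKh, hK, mul_assoc, ← pow_succ]
  have hs2 : s ^ 2 = 1 := by rw [sq, H.ss]
  have hsE : ∀ c, s ^ (2 * c) = 1 := fun c => by rw [pow_mul, hs2, one_pow]
  have hCK : Commute K g := by rw [hK]; exact hC.mul_left ((Commute.refl g).pow_left _)
  have hKn : K ^ n = 1 := by
    rw [hK, (hC.pow_right _).mul_pow, ← pow_mul g,
      show (4 * r ^ 2 + 6 * r + 2) * n = 0 + 8 * (r + 1) ^ 2 * (2 * r + 1) by rw [hn]; ring,
      pow_red H.gh, show n = 2 * (2 * (r + 1)) by rw [hn]; ring, hsE]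
    simp
  have hg : K ^ (n - 1) * Kh = g := by
    rw [hKg, ← mul_assoc, ← pow_succ, hn1, hKn, one_mul]
  have hKhn : Kh ^ n = (K ^ (n - 1)) ^ 2 := by
    rw [hKh, hK, (hC.pow_right _).mul_pow, (hC.pow_right _).mul_pow,
      (((hC.pow_left _).pow_right _).pow_right _).mul_pow, ← pow_mul g, ← pow_mul g, ← pow_mul g,
      show n = 2 * (2 * (r + 1)) by rw [hn]; ring, hsE, ← pow_mul s, mul_comm _ 2, hsE]
    congr 1
    rw [show 2 * (2 * (r + 1)) - 1 = 4 * r + 3 by omega, ← pow_red H.gh _ (2 * r)]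
    congr 1
    ring
  have hKh2 : Kh ^ n ^ 2 = 1 := by
    rw [sq, pow_mul, hKhn, ← pow_mul, ← pow_mul,
      show (n - 1) * (2 * n) = n * ((n - 1) * 2) by ring, pow_mul, hKn, one_pow]
  have hN1 : n ^ 2 - 1 + 1 = n ^ 2 := Nat.sub_add_cancel (by rw [hNh]; nlinarith [sq_nonneg r])
  have hq1 : q ^ n * q ^ (2 * (4 * r ^ 2 + 6 * r + 2)) = -1 := by
    rw [← hqh, ← pow_add, hn]; ring_nf
  have hc1 : q⁻¹ ^ (2 * (4 * r ^ 2 + 6 * r + 2)) * -1 = q ^ n := by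
    rw [← hq1, inv_pow]; field_simp
  have hc2 : q ^ (2 * (4 * r ^ 2 + 6 * r + 2)) * -1 = (q ^ n)⁻¹ := by
    have : q ^ (2 * (4 * r ^ 2 + 6 * r + 2)) = - (q ^ n)⁻¹ := by
      field_simp
      rw [mul_comm]; exact hq1
    rw [this]; ring
  have hKE : K * E = q ^ n • (E * K) := by
    rw [hK, mul_assoc, comm_pow_left H.gE, mul_smul_comm, ← mul_assoc, H.sE, smul_mul_assoc,
      smul_smul, mul_assoc, ← pow_mul, hc1]
  have hKF : K * F = (q ^ n)⁻¹ • (F * K) := by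
    rw [hK, mul_assoc, comm_pow_left H.gF, mul_smul_comm, ← mul_assoc, H.sF, smul_mul_assoc,
      smul_smul, mul_assoc, ← pow_mul, hc2]
  have hKhE : Kh * E = (q ^ n * (q ^ 2)⁻¹) • (E * Kh) := by
    rw [hKg, mul_assoc, H.gE, mul_smul_comm, ← mul_assoc, hKE, smul_mul_assoc, smul_smul,
      mul_assoc, inv_pow, mul_comm]
  have hKhF : Kh * F = ((q ^ n)⁻¹ * q ^ 2) • (F * Kh) := by
    rw [hKg, mul_assoc, H.gF, mul_smul_comm, ← mul_assoc, hKF, smul_mul_assoc, smul_smul,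
      mul_assoc, mul_comm]
  refine ⟨⟨hKn, hKhn, ?_, ?_, ?_, ?_, ?_, H.EN, H.FN, ?_⟩, hg, ?_⟩
  · rw [hKg]; exact ((Commute.refl K).mul_right hCK).eq
  · rw [hKE, smul_mul_assoc, mul_assoc, ← pow_succ', hn1, hKn, mul_one]
  · rw [hKF, smul_mul_assoc, mul_assoc, ← pow_succ', hn1, hKn, mul_one]
  · rw [hKhE, smul_mul_assoc, mul_assoc, ← pow_succ', hN1, hKh2, mul_one]
  · rw [hKhF, smul_mul_assoc, mul_assoc, ← pow_succ', hN1, hKh2, mul_one]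
  · rw [hg, H.FE]; abel
  · rw [hKh, hK, show n / 2 = 2 * (r + 1) by omega, (hC.pow_right _).mul_pow, hsE, one_mul,
      mul_assoc, ← pow_mul, ← pow_add,
      show 4 * r ^ 2 + 6 * r + 2 + (4 * r ^ 2 + 6 * r + 3) * (2 * (r + 1)) =
        0 + 8 * (r + 1) ^ 2 * (r + 1) by ring, pow_red H.gh]
    simp

end big

section U
open QFL
variable {k : Type} [Field k] {n : ℕ} {q : k}

lemma U_big : Big n q (K k n q) (Kh k n q) (E k n q) (F k n q) := by
  have R := fun x y (hxy : Rel k n q x y) => RingQuot.mkAlgHom_rel k hxy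
  constructor
  · simpa [K] using R _ _ Rel.Kord
  · simpa [K, Kh] using R _ _ Rel.Khord
  · simpa [K, Kh] using R _ _ Rel.KKh
  · simpa [K, E] using R _ _ Rel.KE
  · simpa [K, F] using R _ _ Rel.KF
  · simpa [Kh, E] using R _ _ Rel.KhE
  · simpa [Kh, F] using R _ _ Rel.KhF
  · simpa [E] using R _ _ Rel.Enil
  · simpa [F] using R _ _ Rel.Fnil
  · simpa [K, Kh, E, F] using R _ _ Rel.EF

lemma U_lift {A : Type*} [Ring A] [Algebra k A] {K' Kh' E' F' : A}
    (B : Big n q K' Kh' E' F') : ∃ ρ : U k n q →ₐ[k] A,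
      ρ (K k n q) = K' ∧ ρ (Kh k n q) = Kh' ∧ ρ (E k n q) = E' ∧ ρ (F k n q) = F' := by
  let f : FreeAlgebra k (Fin 4) →ₐ[k] A := FreeAlgebra.lift k ![K', Kh', E', F']
  have f0 : f (FreeAlgebra.ι k 0) = K' := by simp [f]
  have f1 : f (FreeAlgebra.ι k 1) = Kh' := by simp [f]
  have f2 : f (FreeAlgebra.ι k 2) = E' := by simp [f]
  have f3 : f (FreeAlgebra.ι k 3) = F' := by simp [f]
  have hf : ∀ ⦃x y⦄, Rel k n q x y → f x = f y := by
    intro x y hxy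
    cases hxy
    · simpa [f0] using B.Kord
    · simpa [f0, f1] using B.Khord
    · simpa [f0, f1] using B.KKh
    · simpa [f0, f2] using B.KE
    · simpa [f0, f3] using B.KF
    · simpa [f1, f2] using B.KhE
    · simpa [f1, f3] using B.KhF
    · simpa [f2] using B.Enil
    · simpa [f3] using B.Fnil
    · simpa [f0, f1, f2, f3] using B.EF
  refine ⟨RingQuot.liftAlgHom k ⟨f, hf⟩, ?_, ?_, ?_, ?_⟩
  · rw [K, RingQuot.liftAlgHom_mkAlgHom_apply, f0]
  · rw [Kh, RingQuot.liftAlgHom_mkAlgHom_apply, f1]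
  · rw [E, RingQuot.liftAlgHom_mkAlgHom_apply, f2]
  · rw [F, RingQuot.liftAlgHom_mkAlgHom_apply, f3]

lemma U_gen4 (B : Subalgebra k (U k n q)) (h0 : K k n q ∈ B) (h1 : Kh k n q ∈ B)
    (h2 : E k n q ∈ B) (h3 : F k n q ∈ B) : B = ⊤ := by
  rw [eq_top_iff]
  rintro x -
  obtain ⟨y, rfl⟩ := RingQuot.mkAlgHom_surjective k (Rel k n q) x
  induction y using FreeAlgebra.induction with
  | grade0 r => simp
  | grade1 i => fin_cases i <;> assumption
  | mul a b ha hb => rw [map_mul]; exact B.mul_mem ha hb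
  | add a b ha hb => rw [map_add]; exact B.add_mem ha hb

end U
end QFLaux
namespace QFLaux
open Finset

section abs
set_option linter.unusedSectionVars false
variable {k A : Type*} [Field k] [CharZero k] [Ring A] [Algebra k A]

def on (s : A) (j : ℕ) : A := (2 : k)⁻¹ • (1 + ((-1 : k) ^ j) • s)

def ee (h : ℕ) (q : k) (g s : A) (i j : ℕ) : A := ph h q g i * on (k := k) s j

structure Ctx (h N : ℕ) (q : k) (g s E F : A) : Prop where
  H : QS h N q g s E F
  hq : IsPrimitiveRoot q N
  hNh : N = 2 * h
  h0 : 0 < h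
  hgen : Algebra.adjoin k {g, s, E, F} = ⊤
  reps : ∀ i j : ℕ, ∃ ρ : A →ₐ[k] Module.End k (V k N), ρ g = gop N q (q ^ (2 * i)) ∧
    ρ s = sop N ((-1) ^ j) ∧ ρ E = Eop N q (q ^ (2 * i)) ∧ ρ F = Fop N

variable {h N : ℕ} {q : k} {g s E F : A}

lemma Ctx.hN (C : Ctx h N q g s E F) : 1 < N := by
  have := C.hNh; have := C.h0; omega

lemma Ctx.q0 (C : Ctx h N q g s E F) : q ≠ 0 := by
  have := C.hN; exact C.hq.ne_zero (by omega)

lemma m1 (j : ℕ) : ((-1 : k) ^ j) * (-1) ^ j = 1 := by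
  rw [← pow_add]; exact Even.neg_one_pow ⟨j, rfl⟩

lemma g_ee (C : Ctx h N q g s E F) (i j : ℕ) : g * ee h q g s i j = q ^ (2 * i) • ee h q g s i j := by
  rw [ee, ← mul_assoc, g_ph C.q0 (by rw [← C.hNh]; exact C.hq.pow_eq_one) C.H.gh, smul_mul_assoc]

lemma s_ee (C : Ctx h N q g s E F) (i j : ℕ) :
    s * ee h q g s i j = ((-1 : k) ^ j) • ee h q g s i j := by
  have h1 : Commute s (ph h q g i) := by
    unfold ph
    refine Commute.smul_right (Commute.sum_right _ _ _ fun t _ => Commute.smul_right ?_ _) _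
    exact Commute.pow_right C.H.gs.symm t
  rw [ee, ← mul_assoc, h1.eq, mul_assoc, ← mul_smul_comm]
  congr 1
  rw [on, mul_smul_comm, smul_comm]
  congr 1
  rw [mul_add, mul_one, mul_smul_comm, C.H.ss, smul_add, smul_smul, m1, one_smul, add_comm]

lemma ee_sum (C : Ctx h N q g s E F) :
    ∑ i ∈ range h, ∑ j ∈ range 2, ee h q g s i j = 1 := by
  have h1 : on (k := k) s 0 + on (k := k) s 1 = 1 := by
    rw [on, on, ← smul_add]
    simp only [pow_zero, one_smul, pow_one, neg_smul]
    rw [show (1 : A) + s + (1 + -s) = (2 : k) • (1 : A) by rw [two_smul]; abel, smul_smul,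
      inv_mul_cancel₀ two_ne_zero, one_smul]
  simp only [sum_range_succ, range_zero, sum_empty, zero_add]
  simp only [ee, ← mul_add, h1, mul_one]
  exact ph_sum C.h0 (C.hNh ▸ C.hq)

lemma rho_ee (C : Ctx h N q g s E F) (i j : ℕ) {ρ : A →ₐ[k] Module.End k (V k N)}
    (hg : ρ g = gop N q (q ^ (2 * i))) (hs : ρ s = sop N ((-1) ^ j)) :
    ρ (ee h q g s i j) (dl N 0 0) = dl N 0 0 := by
  have h1 : ρ (on (k := k) s j) (dl N 0 0) = dl N 0 0 := by
    rw [on, map_smul, map_add, map_one, map_smul, hs]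
    simp only [LinearMap.smul_apply, LinearMap.add_apply, s_dl, Module.End.one_apply, smul_smul, m1,
      one_smul]
    rw [← two_smul k, smul_smul, inv_mul_cancel₀ two_ne_zero, one_smul]
  have h2 : ρ (ph h q g i) = ph h q (ρ g) i := by simp [ph]
  rw [ee, map_mul, Module.End.mul_apply, h1, h2]
  have h3 : ρ g • (dl N 0 0 : V k N) = q ^ (2 * i) • dl N 0 0 := by rw [hg]; exact g_dl _ _
  exact ph_smul (M := V k N) C.h0 C.q0 h3

/-- spans of monomials -/
def pbS (k : Type*) {A : Type*} [Field k] [Ring A] [Algebra k A] (g s E F : A) (P : ℕ → Prop) :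
    Submodule k A :=
  Submodule.span k {x | ∃ a b c d : ℕ, P a ∧ x = F ^ a * (g ^ c * (s ^ d * E ^ b))}

lemma pbS_mono {P : ℕ → Prop} {a : ℕ} (ha : P a) (b c d : ℕ) :
    F ^ a * (g ^ c * (s ^ d * E ^ b)) ∈ pbS k g s E F P :=
  Submodule.subset_span ⟨a, b, c, d, ha, rfl⟩

lemma pbS_map {P Q : ℕ → Prop} (x : A)
    (hx : ∀ a b c d, P a → x * (F ^ a * (g ^ c * (s ^ d * E ^ b))) ∈ pbS k g s E F Q) :
    ∀ w ∈ pbS k g s E F P, x * w ∈ pbS k g s E F Q := by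
  intro w hw
  induction hw using Submodule.span_induction with
  | mem w hw => obtain ⟨a, b, c, d, ha, rfl⟩ := hw; exact hx a b c d ha
  | zero => rw [mul_zero]; exact Submodule.zero_mem _
  | add x y _ _ h1 h2 => rw [mul_add]; exact Submodule.add_mem _ h1 h2
  | smul r x _ h1 => rw [mul_smul_comm]; exact Submodule.smul_mem _ _ h1

lemma g_pbS (C : Ctx h N q g s E F) {P : ℕ → Prop} :
    ∀ w ∈ pbS k g s E F P, g * w ∈ pbS k g s E F P := by
  refine pbS_map g fun a b c d ha => ?_
  rw [← mul_assoc, comm_pow_right C.H.gF, smul_mul_assoc, mul_assoc, ← mul_assoc g, ← pow_succ']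
  exact Submodule.smul_mem _ _ (pbS_mono ha _ _ _)

lemma s_pbS (C : Ctx h N q g s E F) {P : ℕ → Prop} :
    ∀ w ∈ pbS k g s E F P, s * w ∈ pbS k g s E F P := by
  refine pbS_map s fun a b c d ha => ?_
  rw [← mul_assoc, comm_pow_right C.H.sF, smul_mul_assoc, mul_assoc, ← mul_assoc s,
    (Commute.pow_right (show Commute s g from C.H.gs.symm) c).eq, mul_assoc, ← mul_assoc s,
    ← pow_succ']
  exact Submodule.smul_mem _ _ (pbS_mono ha _ _ _)

lemma F_pbS : ∀ w ∈ pbS k g s E F (fun _ => True), F * w ∈ pbS k g s E F (fun _ => True) := by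
  refine pbS_map F fun a b c d ha => ?_
  rw [← mul_assoc, ← pow_succ']
  exact pbS_mono trivial _ _ _

lemma Eg (C : Ctx h N q g s E F) : E * g = (q ^ 2) • (g * E) := by
  rw [C.H.gE, smul_smul, ← mul_pow, mul_inv_cancel₀ C.q0, one_pow, one_smul]

lemma Es (C : Ctx h N q g s E F) : E * s = (-1 : k) • (s * E) := by
  rw [C.H.sE, smul_smul]; simp

lemma E_X (C : Ctx h N q g s E F) (c d b : ℕ) : ∃ r : k,
    E * (g ^ c * (s ^ d * E ^ b)) = r • (g ^ c * (s ^ d * E ^ (b + 1))) := by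
  refine ⟨(q ^ 2) ^ c * (-1) ^ d, ?_⟩
  rw [← mul_assoc, comm_pow_right (Eg C), smul_mul_assoc, mul_assoc, ← mul_assoc E,
    comm_pow_right (Es C), smul_mul_assoc, mul_smul_comm, smul_smul, mul_assoc, ← pow_succ']

lemma E_pbS (C : Ctx h N q g s E F) :
    ∀ w ∈ pbS k g s E F (fun _ => True), E * w ∈ pbS k g s E F (fun _ => True) := by
  refine pbS_map E fun a b c d ha => ?_
  obtain ⟨r, hr⟩ := E_X C c d b
  rcases a with _ | m
  · rw [pow_zero, one_mul, hr]
    refine Submodule.smul_mem _ _ ?_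
    have := pbS_mono (k := k) (g := g) (s := s) (E := E) (F := F) (P := fun _ => True) (a := 0)
      trivial (b + 1) c d
    simpa using this
  · obtain ⟨u, v, huv⟩ := EFpow C.H.toQS0 C.q0 m
    rw [← mul_assoc, huv, add_mul, smul_mul_assoc, mul_assoc, hr, mul_smul_comm, mul_assoc, add_mul,
      smul_mul_assoc, smul_mul_assoc, one_mul, mul_add, mul_smul_comm, mul_smul_comm, ← mul_assoc g,
      ← pow_succ']
    refine Submodule.add_mem _ (Submodule.smul_mem _ _ (Submodule.smul_mem _ _ ?_))
      (Submodule.add_mem _ (Submodule.smul_mem _ _ ?_) (Submodule.smul_mem _ _ ?_)) <;>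
    exact pbS_mono trivial _ _ _

lemma mem_pbS (C : Ctx h N q g s E F) (x : A) : x ∈ pbS k g s E F (fun _ => True) := by
  have h1 : (1 : A) ∈ pbS k g s E F (fun _ => True) := by
    have := pbS_mono (k := k) (g := g) (s := s) (E := E) (F := F) (P := fun _ => True) (a := 0)
      trivial 0 0 0
    simpa using this
  have := stable C.hgen (pbS k g s E F (fun _ => True)) (g_pbS C) (s_pbS C) (E_pbS C) F_pbS x 1 h1
  simpa using this

lemma decomp (C : Ctx h N q g s E F) (x : A) :
    ∃ p ∈ pbS k g s E F (fun a => a < N - 1), F * x = F * p := by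
  have hx := mem_pbS C x
  induction hx using Submodule.span_induction with
  | mem w hw =>
    obtain ⟨a, b, c, d, -, rfl⟩ := hw
    by_cases ha : a < N - 1
    · exact ⟨F ^ a * (g ^ c * (s ^ d * E ^ b)), pbS_mono (P := fun a => a < N - 1) ha b c d, rfl⟩
    · refine ⟨0, Submodule.zero_mem _, ?_⟩
      rw [← mul_assoc, ← pow_succ', show a + 1 = N + (a + 1 - N) by omega, pow_add, C.H.FN]
      simp
  | zero => exact ⟨0, Submodule.zero_mem _, rfl⟩
  | add x y _ _ h1 h2 =>
    obtain ⟨p, hp, e1⟩ := h1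
    obtain ⟨p', hp', e2⟩ := h2
    exact ⟨p + p', Submodule.add_mem _ hp hp', by rw [mul_add, mul_add, e1, e2]⟩
  | smul r x _ h1 =>
    obtain ⟨p, hp, e1⟩ := h1
    exact ⟨r • p, Submodule.smul_mem _ _ hp, by rw [mul_smul_comm, mul_smul_comm, e1]⟩

lemma pb_e (C : Ctx h N q g s E F) (i j : ℕ) {x : A}
    (hx : x ∈ pbS k g s E F (fun a => a < N - 1)) : ∃ y : ℕ → ℕ → k,
    x * ee h q g s i j =
      ∑ a ∈ range (N - 1), ∑ b ∈ range N, y a b • (F ^ a * (E ^ b * ee h q g s i j)) := by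
  induction hx using Submodule.span_induction with
  | mem w hw =>
    obtain ⟨a, b, c, d, ha, rfl⟩ := hw
    by_cases hb : b < N
    · have hg : g • E ^ b • ee h q g s i j = _ := weight_E C.H.gE (M := A) (g_ee C i j) b
      have hs : s • E ^ b • ee h q g s i j = _ := weight_E C.H.sE (M := A) (s_ee C i j) b
      simp only [smul_eq_mul] at hg hs
      have pw : ∀ (x v : A) (l : k), x * v = l • v → ∀ m, x ^ m * v = l ^ m • v := by
        intro x v l hx m
        induction m with
        | zero => simp
        | succ m ih => rw [pow_succ, mul_assoc, hx, mul_smul_comm, ih, smul_smul, pow_succ,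
            mul_comm]
      refine ⟨fun a' b' => if a' = a then if b' = b then
        ((-1) ^ b * (-1) ^ j) ^ d * ((q⁻¹ ^ 2) ^ b * q ^ (2 * i)) ^ c else 0 else 0, ?_⟩
      rw [sum_eq_single_of_mem a (by simpa using ha), sum_eq_single_of_mem b (by simpa using hb)]
      · beta_reduce
        rw [if_pos rfl, if_pos rfl]
        simp only [mul_assoc]
        rw [pw _ _ _ hs, mul_smul_comm, pw _ _ _ hg, smul_smul, mul_smul_comm]
      · intro b' _ hb'; simp [hb']
      · intro a' _ ha'; simp [ha']
    · refine ⟨0, ?_⟩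
      rw [show b = N + (b - N) by omega, pow_add, C.H.EN]
      simp
  | zero => exact ⟨0, by simp⟩
  | add x y _ _ h1 h2 =>
    obtain ⟨y1, e1⟩ := h1
    obtain ⟨y2, e2⟩ := h2
    exact ⟨y1 + y2, by rw [add_mul, e1, e2]; simp [add_smul, sum_add_distrib]⟩
  | smul r x _ h1 =>
    obtain ⟨y1, e1⟩ := h1
    exact ⟨r • y1, by rw [smul_mul_assoc, e1]; simp [smul_sum, smul_smul]⟩

lemma uniq0 (C : Ctx h N q g s E F) {x : A} (hx : x ∈ pbS k g s E F (fun a => a < N - 1))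
    (h0 : F * x = 0) : x = 0 := by
  have key : ∀ i j, x * ee h q g s i j = 0 := by
    intro i j
    obtain ⟨y, hy⟩ := pb_e C i j hx
    obtain ⟨ρ, r1, r2, r3, r4⟩ := C.reps i j
    have e0 : ρ (F * (x * ee h q g s i j)) (dl N 0 0) = 0 := by
      rw [← mul_assoc, h0, zero_mul, map_zero, LinearMap.zero_apply]
    have e1 : ∀ a b, ρ (F * (F ^ a * (E ^ b * ee h q g s i j))) (dl N 0 0) = dl N (a + 1) b := by
      intro a b
      rw [← mul_assoc, ← pow_succ', map_mul, map_mul, Module.End.mul_apply, Module.End.mul_apply,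
        rho_ee C i j r1 r2, map_pow, map_pow, r3, r4, Epow_dl, zero_add, Fpow_dl]
    rw [hy] at e0 ⊢
    simp only [mul_sum, mul_smul_comm, map_sum, map_smul, LinearMap.sum_apply,
      LinearMap.smul_apply, e1] at e0
    refine sum_eq_zero fun a ha => sum_eq_zero fun b hb => ?_
    have ha' := mem_range.1 ha
    have hb' := mem_range.1 hb
    have e2 := congrArg (fun f => ex N f (a + 1) b) e0
    simp only [map_sum, map_smul, map_zero, Finset.sum_apply, Pi.smul_apply, ex_dl,
      Pi.zero_apply] at e2
    rw [sum_eq_single_of_mem a ha, sum_eq_single_of_mem b hb] at e2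
    · rw [if_pos ⟨⟨by omega, hb'⟩, rfl, rfl⟩, smul_eq_mul, mul_one] at e2
      rw [e2, zero_smul]
    · intro b' _ hne
      rw [if_neg (by omega), smul_zero]
    · intro a' _ hne
      refine sum_eq_zero fun b' _ => ?_
      rw [if_neg (by omega), smul_zero]
  rw [← mul_one x, ← ee_sum C, mul_sum]
  exact sum_eq_zero fun i _ => by rw [mul_sum]; exact sum_eq_zero fun j _ => key i j

lemma uniq (C : Ctx h N q g s E F) {x y : A} (hx : x ∈ pbS k g s E F (fun a => a < N - 1))
    (hy : y ∈ pbS k g s E F (fun a => a < N - 1))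
    (h0 : F * x = F * y) : x = y :=
  sub_eq_zero.1 (uniq0 C (Submodule.sub_mem _ hx hy) (by rw [mul_sub, h0, sub_self]))

lemma exu (C : Ctx h N q g s E F) {i : ℕ} (hi : 1 ≤ i) (hi2 : i ≤ h) (j : ℕ) :
    ∃! x, x ∈ pbS k g s E F (fun a => a < N - 1) ∧
      F * x = E ^ (2 * i - 2) * (F ^ (N - 1) * ee h q g s i j) := by
  have := C.hNh
  obtain ⟨y, hy⟩ := E_F_mem C.H.toQS0 C.q0 (2 * i - 2) (N - 1 - (2 * i - 2)) (ee h q g s i j)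
  rw [show 2 * i - 2 + (N - 1 - (2 * i - 2)) = N - 1 by omega,
    show N - 1 - (2 * i - 2) = (N - 1 - (2 * i - 2) - 1) + 1 by omega, pow_succ', mul_assoc] at hy
  obtain ⟨p, hp, e⟩ := decomp C (F ^ (N - 1 - (2 * i - 2) - 1) * y)
  refine ⟨p, ⟨hp, by rw [hy, e]⟩, ?_⟩
  rintro x ⟨hx, ex⟩
  exact uniq C hx hp (by rw [ex, hy, e])

lemma mkCore (C : Ctx h N q g s E F) {i : ℕ} (hi : 1 ≤ i) (hi2 : i ≤ h) (j : ℕ) {x : A}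
    (hx : x ∈ pbS k g s E F (fun a => a < N - 1))
    (hF : F * x = E ^ (2 * i - 2) * (F ^ (N - 1) * ee h q g s i j)) :
    Core N q g E F i (F ^ (N - 1) * ee h q g s i j) x ∧
    s * (F ^ (N - 1) * ee h q g s i j) = (-(-1 : k) ^ j) • (F ^ (N - 1) * ee h q g s i j) ∧
    s * x = ((-1 : k) ^ j) • x := by
  have hNh := C.hNh
  have hN := C.hN
  have hq0 := C.q0
  have ga : g * (F ^ (N - 1) * ee h q g s i j) =
      q ^ (2 * i - 2) • (F ^ (N - 1) * ee h q g s i j) := by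
    rw [← mul_assoc, comm_pow_right C.H.gF, smul_mul_assoc, mul_assoc, g_ee C, mul_smul_comm,
      smul_smul, ← pow_mul, ← pow_add, show 2 * (N - 1) + 2 * i = (2 * i - 2) + N * 2 by omega,
      pow_add, pow_mul, C.hq.pow_eq_one, one_pow, mul_one]
  have sa : s * (F ^ (N - 1) * ee h q g s i j) =
      (-(-1 : k) ^ j) • (F ^ (N - 1) * ee h q g s i j) := by
    rw [← mul_assoc, comm_pow_right C.H.sF, smul_mul_assoc, mul_assoc, s_ee C, mul_smul_comm,
      smul_smul, (show Odd (N - 1) from ⟨h - 1, by omega⟩).neg_one_pow, neg_one_mul]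
  have gb : g • E ^ (2 * i - 2) • (F ^ (N - 1) * ee h q g s i j) = _ :=
    weight_E C.H.gE (M := A) ga (2 * i - 2)
  have sb : s • E ^ (2 * i - 2) • (F ^ (N - 1) * ee h q g s i j) = _ :=
    weight_E C.H.sE (M := A) sa (2 * i - 2)
  simp only [smul_eq_mul, ← hF] at gb sb
  have Fg : F * g = (q ^ 2)⁻¹ • (g * F) := by
    rw [C.H.gF, smul_smul, inv_mul_cancel₀ (pow_ne_zero _ hq0), one_smul]
  have Fs : F * s = (-1 : k) • (s * F) := by
    rw [C.H.sF, smul_smul]; simp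
  have gx : g * x = q ^ (N - 2 * i) • x := by
    refine uniq C (g_pbS C _ hx) (Submodule.smul_mem _ _ hx) ?_
    rw [← mul_assoc, Fg, smul_mul_assoc, mul_assoc, gb, smul_smul, mul_smul_comm]
    congr 1
    have e1 : q ^ (N - 2 * i) * q ^ (2 * i) = 1 := by
      rw [← pow_add, show N - 2 * i + 2 * i = N by omega, C.hq.pow_eq_one]
    obtain ⟨t, rfl⟩ := Nat.exists_eq_add_of_le' hi
    rw [eq_inv_of_mul_eq_one_left e1, show 2 * (t + 1) - 2 = 2 * t by omega]
    rw [inv_pow, inv_pow]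
    field_simp
    ring
  have sx : s * x = ((-1 : k) ^ j) • x := by
    refine uniq C (s_pbS C _ hx) (Submodule.smul_mem _ _ hx) ?_
    rw [← mul_assoc, Fs, smul_mul_assoc, mul_assoc, sb, smul_smul, mul_smul_comm,
      (show Even (2 * i - 2) from ⟨i - 1, by omega⟩).neg_one_pow]
    simp
  refine ⟨⟨hi, by omega, ?_, ga, hF, gx, ?_⟩, sa, sx⟩
  · rw [smul_eq_mul, ← mul_assoc, ← pow_succ', show N - 1 + 1 = N by omega, C.H.FN, zero_mul]
  · obtain ⟨ρ, r1, r2, r3, r4⟩ := C.reps i j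
    intro h0
    have := congrArg (fun w => ρ w (dl N 0 0)) h0
    simp only [smul_eq_mul, map_mul, map_pow, r3, r4, Module.End.mul_apply, rho_ee C i j r1 r2,
      map_zero, LinearMap.zero_apply] at this
    exact top_ne hq0 hN _ this

end abs
end QFLaux
namespace QFLaux
open Finset

section soc
set_option linter.unusedSectionVars false
variable {k A M : Type*} [Field k] [CharZero k] [Ring A] [Algebra k A] [AddCommGroup M] [Module k M]
  [Module A M] [IsScalarTower k A M]
  {h N : ℕ} {q : k} {g s E F : A} {i : ℕ} {al ga : M} {sa sg : k}

lemma Phi_self (hN : 0 < N) (E : A) (v : M) :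
    Phi N E v (fun b => if b = 0 then (1 : k) else 0) = v := by
  rw [Phi_apply, sum_eq_single_of_mem 0 (by simpa using hN)]
  · simp
  · intro b _ hb; simp [hb]

lemma P_form (C : Ctx h N q g s E F) (D : Core N q g E F i al ga) (hsa : s • al = sa • al)
    (hsg : s • ga = sg • ga) {w : M} (hw : w ∈ Submodule.span A {ga}) :
    ∃ x y : ℕ → k, w = Phi N E ga x + Phi N E al y := by
  obtain ⟨a, rfl⟩ := Submodule.mem_span_singleton.1 hw
  let W : Submodule k M := LinearMap.range (Phi N E ga) ⊔ LinearMap.range (Phi N E al)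
  have hW : ∀ w, w ∈ W ↔ ∃ x y : ℕ → k, w = Phi N E ga x + Phi N E al y := by
    intro w
    simp only [W, Submodule.mem_sup, LinearMap.mem_range]
    constructor
    · rintro ⟨_, ⟨x, rfl⟩, _, ⟨y, rfl⟩, rfl⟩; exact ⟨x, y, rfl⟩
    · rintro ⟨x, y, rfl⟩; exact ⟨_, ⟨x, rfl⟩, _, ⟨y, rfl⟩, rfl⟩
  rw [← hW]
  refine stable C.hgen W ?_ ?_ ?_ ?_ a ga ?_
  · intro w hw
    obtain ⟨x, y, rfl⟩ := (hW w).1 hw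
    rw [hW, smul_add, diag_Phi C.H.gE D.gga, diag_Phi C.H.gE D.gal]
    exact ⟨_, _, rfl⟩
  · intro w hw
    obtain ⟨x, y, rfl⟩ := (hW w).1 hw
    rw [hW, smul_add, diag_Phi C.H.sE hsg, diag_Phi C.H.sE hsa]
    exact ⟨_, _, rfl⟩
  · intro w hw
    obtain ⟨x, y, rfl⟩ := (hW w).1 hw
    rw [hW, smul_add, E_Phi C.H.EN, E_Phi C.H.EN]
    exact ⟨_, _, rfl⟩
  · intro w hw
    obtain ⟨x, y, rfl⟩ := (hW w).1 hw
    rw [hW, D.F_w C.H C.hq C.hN]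
    exact ⟨_, _, rfl⟩
  · rw [hW]
    exact ⟨_, 0, by rw [Phi_self (lt_trans zero_lt_one C.hN), map_zero, add_zero]⟩

lemma z_mem (C : Ctx h N q g s E F) (D : Core N q g E F i al ga) (hsa : s • al = sa • al)
    (hsg : s • ga = sg • ga) {Q : Submodule A M} (hQ : Q ≤ Submodule.span A {ga}) (h0 : Q ≠ ⊥) :
    E ^ (2 * i - 1) • al ∈ Q := by
  obtain ⟨v, hv, hv0⟩ := Submodule.exists_mem_ne_zero_of_ne_bot h0
  obtain ⟨m, hm, hm0⟩ := exists_F_killed C.H.FN hv0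
  have hmQ : F ^ m • v ∈ Q := Q.smul_mem _ hv
  obtain ⟨x, y, hxy⟩ := P_form C D hsa hsg (hQ hmQ)
  rw [hxy] at hm hm0 hmQ
  obtain ⟨a, ha⟩ := D.main C.H C.hq C.hN hm hm0
  rw [← ha]
  exact Q.smul_mem _ hmQ

lemma z_P (D : Core N q g E F i al ga) :
    E ^ (2 * i - 1) • al ∈ Submodule.span A {ga} := by
  have : E ^ (2 * i - 1) • al = (E * F) • ga := by
    have := D.hi
    rw [mul_smul, D.Fga, smul_smul, ← pow_succ', show 2 * i - 2 + 1 = 2 * i - 1 by omega]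
  rw [this]
  exact Submodule.smul_mem _ _ (Submodule.mem_span_singleton_self _)

lemma z_ne (D : Core N q g E F i al ga) : E ^ (2 * i - 1) • al ≠ 0 := by
  intro h0
  apply D.z_nz
  rw [h0, smul_zero]

lemma z_simple (C : Ctx h N q g s E F) (D : Core N q g E F i al ga) (hsa : s • al = sa • al)
    (hsg : s • ga = sg • ga) :
    IsSimpleModule A (Submodule.span A {E ^ (2 * i - 1) • al}) := by
  rw [isSimpleModule_iff_isAtom]
  refine ⟨?_, ?_⟩
  · rw [Ne, Submodule.span_singleton_eq_bot]
    exact z_ne D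
  · intro Q hQ
    by_contra h0
    have hP : Submodule.span A {E ^ (2 * i - 1) • al} ≤ Submodule.span A {ga} := by
      rw [Submodule.span_singleton_le_iff_mem]; exact z_P D
    have := z_mem C D hsa hsg (hQ.le.trans hP) h0
    exact hQ.not_ge ((Submodule.span_singleton_le_iff_mem _ _).2 this)

lemma soc_eq (C : Ctx h N q g s E F) (D : Core N q g E F i al ga) (hsa : s • al = sa • al)
    (hsg : s • ga = sg • ga) :
    sSup {Q : Submodule A M | Q ≤ Submodule.span A {ga} ∧ IsSimpleModule A Q} =
      Submodule.span A {E ^ (2 * i - 1) • al} := by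
  have hP : Submodule.span A {E ^ (2 * i - 1) • al} ≤ Submodule.span A {ga} := by
    rw [Submodule.span_singleton_le_iff_mem]; exact z_P D
  apply le_antisymm
  · apply sSup_le
    rintro Q ⟨hQ, hs⟩
    have hat := isSimpleModule_iff_isAtom.1 hs
    have hz := z_mem C D hsa hsg hQ hat.1
    have hle : Submodule.span A {E ^ (2 * i - 1) • al} ≤ Q :=
      (Submodule.span_singleton_le_iff_mem _ _).2 hz
    rcases hat.le_iff.1 hle with h0 | h0
    · rw [Submodule.span_singleton_eq_bot] at h0
      exact absurd h0 (z_ne D)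
    · exact h0.ge
  · exact le_sSup ⟨hP, z_simple C D hsa hsg⟩

lemma z_s (C : Ctx h N q g s E F) (D : Core N q g E F i al ga) (hsa : s • al = sa • al) :
    s • E ^ (2 * i - 1) • al = (-sa) • E ^ (2 * i - 1) • al := by
  rw [weight_E C.H.sE hsa, (show Odd (2 * i - 1) from ⟨i - 1, by have := D.hi; omega⟩).neg_one_pow]
  simp

lemma z_rank (C : Ctx h N q g s E F) (D : Core N q g E F i al ga) (hsa : s • al = sa • al) :
    Module.finrank k ((Submodule.span A {E ^ (2 * i - 1) • al}).restrictScalars k) =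
      N - 2 * i + 1 := by
  have hi := D.hi
  have hi2 := D.hi2
  set z := E ^ (2 * i - 1) • al with hz
  let f : Fin (N - 2 * i + 1) → M := fun b => E ^ (b : ℕ) • z
  have big : ∀ b, N - 2 * i + 1 ≤ b → E ^ b • z = 0 := by
    intro b hb
    rw [show b = (b - (N - 2 * i + 1)) + (N - 2 * i + 1) by omega, pow_add, mul_smul, hz,
      D.z_z C.H, smul_zero]
  have e : (Submodule.span A {z}).restrictScalars k = Submodule.span k (Set.range f) := by
    apply le_antisymm
    · intro w hw
      obtain ⟨a, rfl⟩ := Submodule.mem_span_singleton.1 hw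
      obtain ⟨y, hy⟩ := lw_span C.hgen C.H C.hq C.hN (D.Fz C.H C.hq C.hN) (D.gz C.H C.hq C.hN)
        (z_s C D hsa) a
      rw [← hz] at hy
      rw [hy, Phi_apply]
      refine Submodule.sum_mem _ fun b _ => Submodule.smul_mem _ _ ?_
      by_cases hb : b < N - 2 * i + 1
      · exact Submodule.subset_span ⟨⟨b, hb⟩, rfl⟩
      · rw [big b (by omega)]; exact Submodule.zero_mem _
    · rw [Submodule.span_le]
      rintro _ ⟨b, rfl⟩
      exact Submodule.smul_mem (Submodule.span A {z}) _ (Submodule.mem_span_singleton_self _)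
  have li : LinearIndependent k f := by
    rw [Fintype.linearIndependent_iff]
    intro c hc b
    let y : ℕ → k := fun b => if hb : b < N - 2 * i + 1 then c ⟨b, hb⟩ else 0
    have h1 : Phi (N - 2 * i + 1) E z y = 0 := by
      rw [Phi_apply, ← Fin.sum_univ_eq_sum_range (fun b => y b • E ^ b • z), ← hc]
      exact Finset.sum_congr rfl fun b _ => by simp only [y, f, dif_pos b.2]
    have h2 := Phi_indep D.z_nz (D.z_z C.H) h1 b b.2 (by omega)
    simpa only [y, dif_pos b.2] using h2
  rw [e, finrank_span_eq_card li, Fintype.card_fin]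

end soc
end QFLaux
namespace QFLaux
open Finset QFL

lemma on_one {k A : Type*} [Field k] [Ring A] [Algebra k A] (s : A) :
    on (k := k) s 1 = (2 : k)⁻¹ • (1 - s) := by
  rw [on, pow_one, neg_one_smul, sub_eq_add_neg]

section U2
set_option linter.unusedSectionVars false
variable {k : Type} [Field k] [CharZero k] {r n : ℕ} {q : k}

abbrev gU (k : Type) [Field k] (n : ℕ) (q : k) : U k n q := Kinv k n q * Kh k n q
abbrev sU (k : Type) [Field k] (n : ℕ) (q : k) : U k n q := K k n q * Kh k n q ^ (n / 2)

lemma U_ctx (hn : n = 4 * (r + 1)) (hq : IsPrimitiveRoot q (n ^ 2)) :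
    Ctx (8 * (r + 1) ^ 2) (n ^ 2) q (gU k n q) (sU k n q) (E k n q) (F k n q) := by
  have hNh : n ^ 2 = 2 * (8 * (r + 1) ^ 2) := by rw [hn]; ring
  have hh : 0 < 8 * (r + 1) ^ 2 := by positivity
  obtain ⟨H, hK, hKh⟩ := U_big.toQS (k := k) hn hq
  refine ⟨H, hq, hNh, hh, ?_, ?_⟩
  · have hsub : ∀ x ∈ ({gU k n q, sU k n q, E k n q, F k n q} : Set (U k n q)),
        x ∈ Algebra.adjoin k ({gU k n q, sU k n q, E k n q, F k n q} : Set (U k n q)) :=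
      fun x hx => Algebra.subset_adjoin hx
    have h1 : gU k n q ∈ Algebra.adjoin k ({gU k n q, sU k n q, E k n q, F k n q} : Set (U k n q)) :=
      hsub _ (by simp)
    have h2 : sU k n q ∈ Algebra.adjoin k ({gU k n q, sU k n q, E k n q, F k n q} : Set (U k n q)) :=
      hsub _ (by simp)
    have h3 : K k n q ∈ Algebra.adjoin k ({gU k n q, sU k n q, E k n q, F k n q} : Set (U k n q)) := by
      rw [hK]
      exact mul_mem h2 (pow_mem h1 _)
    refine U_gen4 _ h3 ?_ (hsub _ (by simp)) (hsub _ (by simp))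
    rw [hKh]
    exact mul_mem h3 h1
  · intro i j
    have hN : 1 < n ^ 2 := by omega
    have hl : (q ^ (2 * i)) ^ (8 * (r + 1) ^ 2) = 1 := by
      rw [← pow_mul, show 2 * i * (8 * (r + 1) ^ 2) = n ^ 2 * i by rw [hNh]; ring, pow_mul,
        hq.pow_eq_one, one_pow]
    obtain ⟨B, hg, hs⟩ := QS.toBig hn hq (rep hNh hN hq hl (m1 j)) rfl rfl
    obtain ⟨ρ, r1, r2, r3, r4⟩ := U_lift B
    refine ⟨ρ, ?_, ?_, r3, r4⟩
    · rw [gU, Kinv, map_mul, map_pow, r1, r2, hg]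
    · rw [sU, map_mul, map_pow, r1, r2, hs]

lemma phi_eq (hn : n = 4 * (r + 1)) (i : ℕ) :
    phi k n q i = ph (8 * (r + 1) ^ 2) q (gU k n q) i := by
  have hNh : n ^ 2 = 2 * (8 * (r + 1) ^ 2) := by rw [hn]; ring
  have h2 : n ^ 2 / 2 = 8 * (r + 1) ^ 2 := by omega
  rw [phi, ph, h2]
  congr 1
  have : ((n : k) ^ 2) = 2 * ((8 * (r + 1) ^ 2 : ℕ) : k) := by exact_mod_cast congrArg (Nat.cast : ℕ → k) hNh
  rw [this, mul_inv]
  field_simp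

lemma oneJ_eq {j : ℕ} (hj : j ≤ 1) : oneJ k n q j = on (k := k) (sU k n q) j := by
  rcases Nat.le_one_iff_eq_zero_or_eq_one.1 hj with rfl | rfl
  · simp [oneJ, on]
  · rw [oneJ, if_neg one_ne_zero]; exact (on_one _).symm

lemma eIdem_eq (hn : n = 4 * (r + 1)) (i : ℕ) {j : ℕ} (hj : j ≤ 1) :
    eIdem k n q i j = ee (8 * (r + 1) ^ 2) q (gU k n q) (sU k n q) i j := by
  rw [eIdem, ee, phi_eq hn, oneJ_eq hj]

lemma pbw_eq (hn : n = 4 * (r + 1)) (hq : IsPrimitiveRoot q (n ^ 2)) :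
    pbw k n q = pbS k (gU k n q) (sU k n q) (E k n q) (F k n q) (fun a => a < n ^ 2 - 1) := by
  have C := U_ctx (k := k) hn hq
  have hN := C.hN
  obtain ⟨H, hK, hKh⟩ := U_big.toQS (k := k) hn hq
  have hB : Big n q (K k n q) (Kh k n q) (E k n q) (F k n q) := U_big
  apply le_antisymm
  · rw [pbw, Submodule.span_le]
    rintro _ ⟨a, b, c, d, ha, hb, hc, hd, rfl⟩
    have hC : Commute (gU k n q) (sU k n q) := C.H.gs
    have h1 : K k n q = gU k n q ^ (4 * r ^ 2 + 6 * r + 2) * sU k n q := by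
      rw [(hC.pow_left _).eq]; exact hK
    have h2 : Kh k n q = gU k n q ^ (4 * r ^ 2 + 6 * r + 3) * sU k n q := by
      rw [pow_succ', mul_assoc, ← h1]
      rw [(show Commute (gU k n q) (K k n q) from by
        rw [h1]; exact ((Commute.refl _).pow_right _).mul_right hC).eq]
      exact hKh
    have h3 : K k n q ^ c * Kh k n q ^ d = gU k n q ^ ((4 * r ^ 2 + 6 * r + 2) * c +
        (4 * r ^ 2 + 6 * r + 3) * d) * sU k n q ^ (c + d) := by
      rw [h1, (hC.pow_left _).mul_pow, ← pow_mul, h2, (hC.pow_left _).mul_pow, ← pow_mul, mul_assoc,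
        ← mul_assoc (sU k n q ^ c), ((hC.pow_left _).pow_right c).symm.eq, mul_assoc, ← mul_assoc,
        ← pow_add, ← pow_add]
    rw [mul_assoc (F k n q ^ a), h3, mul_assoc, mul_assoc]
    exact pbS_mono (P := fun a => a < n ^ 2 - 1) (by omega) _ _ _
  · rw [pbS, Submodule.span_le]
    rintro _ ⟨a, b, c, d, ha, rfl⟩
    by_cases hb : b < n ^ 2
    · have hC : Commute (K k n q) (Kh k n q) := hB.KKh
      have h3 : gU k n q ^ c * sU k n q ^ d = K k n q ^ ((n - 1) * c + d) *
          Kh k n q ^ (c + n / 2 * d) := by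
        rw [gU, sU, Kinv, (hC.pow_left _).mul_pow, (hC.pow_right _).mul_pow, ← pow_mul, ← pow_mul,
          mul_assoc, ← mul_assoc (Kh k n q ^ c), ((hC.pow_left d).pow_right c).symm.eq, mul_assoc,
          ← mul_assoc, ← pow_add, ← pow_add]
      rw [← mul_assoc (gU k n q ^ c), h3, pow_eq_pow_mod _ hB.Kord, pow_eq_pow_mod (c + _) hB.KhN,
        ← mul_assoc, ← mul_assoc]
      have e1 := Nat.mod_lt ((n - 1) * c + d) (show 0 < n by omega)
      have e2 := Nat.mod_lt (c + n / 2 * d) (show 0 < n ^ 2 by omega)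
      exact Submodule.subset_span ⟨a, b, _, _, by omega, by omega, Nat.le_sub_one_of_lt e1,
        Nat.le_sub_one_of_lt e2, rfl⟩
    · rw [show b = n ^ 2 + (b - n ^ 2) by omega, pow_add, hB.Enil]
      simp

lemma gam_spec (hn : n = 4 * (r + 1)) (hq : IsPrimitiveRoot q (n ^ 2)) {i j : ℕ} (hi : 1 ≤ i)
    (hi2 : i ≤ 8 * (r + 1) ^ 2) (hj : j ≤ 1) :
    gam k n q i j ∈ pbS k (gU k n q) (sU k n q) (E k n q) (F k n q) (fun a => a < n ^ 2 - 1) ∧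
    F k n q * gam k n q i j = E k n q ^ (2 * i - 2) * (F k n q ^ (n ^ 2 - 1) *
      ee (8 * (r + 1) ^ 2) q (gU k n q) (sU k n q) i j) := by
  have hex : ∃! x, x ∈ pbw k n q ∧ F k n q * x = beta k n q i j := by
    rw [pbw_eq hn hq, beta, alpha, eIdem_eq hn i hj]
    exact exu (U_ctx hn hq) hi hi2 j
  have h1 : gam k n q i j = hex.choose := dif_pos hex
  have h2 := hex.choose_spec.1
  rw [← h1, pbw_eq hn hq, beta, alpha, eIdem_eq hn i hj] at h2
  exact h2

lemma S_spec (hn : n = 4 * (r + 1)) (hq : IsPrimitiveRoot q (n ^ 2)) {i j : ℕ} (hi : 1 ≤ i)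
    (hi2 : i ≤ 8 * (r + 1) ^ 2) (hj : j ≤ 1) :
    IsSimpleModule (U k n q) (S k n q i j) ∧
    Module.finrank k (S k n q i j) = n ^ 2 - 2 * i + 1 ∧
    ∃ z : S k n q i j, z ≠ 0 ∧ F k n q • z = 0 ∧ gU k n q • z = q ^ (n ^ 2 - 2 * i) • z ∧
      sU k n q • z = ((-1 : k) ^ j) • z := by
  have C := U_ctx (k := k) hn hq
  obtain ⟨g1, g2⟩ := gam_spec hn hq hi hi2 hj
  obtain ⟨D, hsa, hsx⟩ := mkCore C hi hi2 j g1 g2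
  have hS : S k n q i j = _ := soc_eq C D hsa hsx
  have hsim := z_simple C D hsa hsx
  have hrk := z_rank C D hsa
  have hzs := z_s C D hsa
  have hFz := D.Fz C.H C.hq C.hN
  have hgz := D.gz C.H C.hq C.hN
  have hz0 := z_ne D
  have hzm := Submodule.mem_span_singleton_self (R := U k n q) (E k n q ^ (2 * i - 1) •
    (F k n q ^ (n ^ 2 - 1) * ee (8 * (r + 1) ^ 2) q (gU k n q) (sU k n q) i j))
  rw [← hS] at hsim hrk hzm
  rw [neg_neg] at hzs
  refine ⟨hsim, hrk, ⟨_, hzm⟩, ?_, ?_, ?_, ?_⟩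
  · intro h; exact hz0 (congrArg Subtype.val h)
  · exact Subtype.ext hFz
  · exact Subtype.ext hgz
  · exact Subtype.ext hzs

end U2
end QFLaux
open QFL in
/-- Corollary 2.13 (b), (d): the `S_{2i,j}` form a complete list of the non-isomorphic
simple left `ũ_q(sl₂)`-modules; `S_{2i,j}` has `k`-dimension `n²-2i+1`, which is odd. -/
theorem statement10 (k : Type) [Field k] [IsAlgClosed k] [CharZero k]
    (n : ℕ) (hn : 0 < n) (h4 : 4 ∣ n) (q : k) (hq : IsPrimitiveRoot q (n ^ 2)) :
    (∀ i j : ℕ, 1 ≤ i → i ≤ n ^ 2 / 2 → j ≤ 1 →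
      IsSimpleModule (U k n q) (S k n q i j) ∧
      Module.finrank k (S k n q i j) = n ^ 2 - 2 * i + 1 ∧
      Odd (Module.finrank k (S k n q i j))) ∧
    (∀ (M : Type) (_ : AddCommGroup M) (_ : Module (U k n q) M),
      IsSimpleModule (U k n q) M →
      ∃ i j : ℕ, 1 ≤ i ∧ i ≤ n ^ 2 / 2 ∧ j ≤ 1 ∧
        Nonempty (M ≃ₗ[U k n q] (S k n q i j))) := by
  obtain ⟨c, rfl⟩ := h4
  obtain ⟨r, rfl⟩ : ∃ r, c = r + 1 := ⟨c - 1, by omega⟩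
  have hNh : (4 * (r + 1)) ^ 2 = 2 * (8 * (r + 1) ^ 2) := by ring
  have hdiv : (4 * (r + 1)) ^ 2 / 2 = 8 * (r + 1) ^ 2 := by omega
  refine ⟨?_, ?_⟩
  · intro i j hi hi2 hj
    rw [hdiv] at hi2
    obtain ⟨h1, h2, -⟩ := QFLaux.S_spec (k := k) rfl hq hi hi2 hj
    refine ⟨h1, h2, ?_⟩
    rw [h2]
    exact ⟨8 * (r + 1) ^ 2 - i, by omega⟩
  · intro M _ _ hM
    have C := QFLaux.U_ctx (k := k) (r := r) rfl hq
    let : Module k M := Module.compHom M (algebraMap k (U k (4 * (r + 1)) q))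
    have : IsScalarTower k (U k (4 * (r + 1)) q) M := ⟨fun x y z => by
      rw [Algebra.smul_def, mul_smul]; rfl⟩
    have : Nontrivial M := IsSimpleModule.nontrivial (U k (4 * (r + 1)) q) M
    have H := C.H
    have hq' := hq
    rw [hNh] at H hq'
    obtain ⟨v, i, j, hv, hi, hi2, hj, hF, hg, hs⟩ := QFLaux.exists_lw (M := M) H C.h0 hq'
    refine ⟨i, j, hi, by rw [hdiv]; exact hi2, hj, ?_⟩
    obtain ⟨h1, -, z, hz, hzF, hzg, hzs⟩ := QFLaux.S_spec (k := k) rfl hq hi hi2 hj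
    rw [← hNh] at hg
    exact QFLaux.iso (M' := S k (4 * (r + 1)) q i j) C.hgen C.H C.hq C.hN hi (by omega) hv hF hg hs hz hzF hzg hzs
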